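/- arXiv:2111.00421 — 3 statements merged into one kernel-verified Lean document; each statement's English description precedes it below -/
import Mathlib

section
/- Let s = (s₀, s₁, s₂) ∈ ℝ³ with 2 = s₀ ≤ s₁ ≤ s₂. There exists a constant C = C(s) > 0 such that for all integers n₂, n₃ with C < n₂ < n₃, one has |P_{n₂}(s)|^{1/n₂²} ≥ |P_{n₃}(s)|^{1/n₃²} · (1 − C (n₃ − n₂)(ln n₃)/n₃). -/
/-!
The boundary of a square of side about `n₂` is small compared with its area, and prescribing an
admissible function to be zero near this boundary changes the volume only by a factor
`n₃ ^ O((n₃ - n₂) n₃)`. Since a function vanishing near the boundary can be cut out of one torus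
and pasted into another, this compares the volumes for `n₃` and `n₂`.

It is convenient to work with the slab of all admissible functions whose mean is in `[-1, 1]`,
a full-dimensional set which is a cylinder over the polytope (`volume_slab_eq`). Split the torus of
side `n₃` into the core `[2, n₂)²` and the remaining frame, and let `F x` be the volume of the set
of admissible functions with values `x` on the frame.

* Upper bound for `n₃` (`volume_slab_le`). By the Brunn–Minkowski inequality (`min_volume_le`,
  obtained from Prékopa–Leindler) `F` is quasi-concave. The average of all translates of an
  admissible `g` is constant, so some translate of `g` has `F ≤ F 0`. Integrating
  `1 / F 0 ≤ ∑ 1 / F` over the slab bounds its volume by `n₃² (2R) ^ #frame * F 0`, where `R` bounds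
  the functions in the slab and is polynomial in `n₃` (`admissible_osc`).
* Transfer (`volume_fibre_zero_le`). The fibre over zero for `n₃` is contained in that for `n₂`.
* Lower bound for `n₂` (`volume_fibre_le`). Shrinking a function by `1 - 1 / n₂` leaves room to
  perturb the boundary values, since `s i ≥ 2`, so `F 0` is at most `n₂ ^ O(n₂)` times the volume of
  the slab.

Mathlib's Hausdorff measure is not normalised: in dimension `d` it differs from Lebesgue measure by
a factor `hratio d`. Covering a cylinder by products shows that these constants change by a
factor at most `6 (d + 1)` from one dimension to the next (`hratio_le_succ`), so over the
`n₃² - n₂²` dimensions in question the change is again `n₃ ^ O((n₃ - n₂) n₃)`. Taking roots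
(`root_compare`) uses in addition that the volume for `n₂` is not too small (`tvol_lower`).
-/

open MeasureTheory Filter

noncomputable section

/-- Cyclic shift by `(a, b)` on the discrete torus `(ℤ/nℤ)²`, realized as `Fin n × Fin n`. -/
def tshift {n : ℕ} (a b : ℕ) (v : Fin n × Fin n) : Fin n × Fin n :=
  (⟨(v.1.val + a) % n, Nat.mod_lt _ (Nat.lt_of_le_of_lt (Nat.zero_le _) v.1.isLt)⟩,
   ⟨(v.2.val + b) % n, Nat.mod_lt _ (Nat.lt_of_le_of_lt (Nat.zero_le _) v.2.isLt)⟩)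

/-- The three rhombus second differences Δ₀, Δ₁, Δ₂ of `g` at `v`. -/
def rdiff {n : ℕ} (i : Fin 3) (g : EuclideanSpace ℝ (Fin n × Fin n)) (v : Fin n × Fin n) : ℝ :=
  if i.val = 0 then g v + g (tshift 2 1 v) - g (tshift 1 0 v) - g (tshift 1 1 v)
  else if i.val = 1 then g v + g (tshift 1 1 v) - g (tshift 1 0 v) - g (tshift 0 1 v)
  else g v + g (tshift 1 2 v) - g (tshift 0 1 v) - g (tshift 1 1 v)

/-- The polytope `P_n(s)`: functions on the torus with total sum `0` and all rhombus second
differences bounded by `s`. -/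
def torusPoly (n : ℕ) (s : Fin 3 → ℝ) : Set (EuclideanSpace ℝ (Fin n × Fin n)) :=
  {g | (∑ v, g v) = 0 ∧ ∀ (i : Fin 3) (v : Fin n × Fin n), rdiff i g v ≤ s i}

/-- `|P_n(s)|`: the `(n²-1)`-dimensional Lebesgue (Hausdorff) measure of `P_n(s)` inside the
hyperplane of functions summing to zero. -/
def tvol (n : ℕ) (s : Fin 3 → ℝ) : ℝ :=
  (μH[((n : ℝ) ^ 2 - 1)] (torusPoly n s)).toReal

section Proof

open scoped ENNReal Pointwise NNReal Topology

/-! ### The Prékopa–Leindler and Brunn–Minkowski inequalities -/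

/-- One-dimensional Brunn–Minkowski for compact sets: `A + B` contains the translates
`A + min B` and `max A + B`, which meet in a single point. -/
lemma bm_compact {A B C : Set ℝ} (hA : IsCompact A) (hB : IsCompact B) (hA0 : A.Nonempty)
    (hB0 : B.Nonempty) (hC : A + B ⊆ C) : volume A + volume B ≤ volume C := by
  have ha := hA.sSup_mem hA0
  have hb := hB.sInf_mem hB0
  set a := sSup A
  set b := sInf B
  have hAm : MeasurableSet A := hA.measurableSet
  have hBm : MeasurableSet B := hB.measurableSet
  have h1 : volume ((fun x => b + x) '' A) = volume A := by simp
  have h2 : volume ((fun x => a + x) '' B) = volume B := by simp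
  have hm2 : MeasurableSet ((fun x => a + x) '' B) :=
    (hB.image (by fun_prop)).measurableSet
  have h3 := measure_union_add_inter (μ := volume) ((fun x => b + x) '' A) hm2
  have h4 : volume (((fun x => b + x) '' A) ∩ ((fun x => a + x) '' B)) = 0 := by
    refine measure_mono_null (t := {a + b}) ?_ (by simp)
    rintro _ ⟨⟨x, hx, rfl⟩, ⟨y, hy, hxy⟩⟩
    have e1 : x ≤ a := le_csSup hA.bddAbove hx
    have e2 : b ≤ y := csInf_le hB.bddBelow hy
    simp only [Set.mem_singleton_iff] at *
    linarith
  rw [h4, add_zero, h1, h2] at h3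
  rw [← h3]
  refine measure_mono (Set.union_subset ?_ ?_)
  · rintro _ ⟨x, hx, rfl⟩
    exact hC ⟨x, hx, b, hb, by ring⟩
  · rintro _ ⟨x, hx, rfl⟩
    exact hC ⟨a, ha, x, hx, rfl⟩

lemma bm_measurable {A B C : Set ℝ} (hA : MeasurableSet A) (hB : MeasurableSet B)
    (hA0 : A.Nonempty) (hB0 : B.Nonempty) (hC : A + B ⊆ C) :
    volume A + volume B ≤ volume C := by
  obtain ⟨a, ha⟩ := hA0
  obtain ⟨b, hb⟩ := hB0
  rw [hA.measure_eq_iSup_isCompact, hB.measure_eq_iSup_isCompact]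
  simp only [iSup_and']
  refine ENNReal.biSup_add_biSup_le' ⟨∅, by simp⟩ ⟨∅, by simp⟩ ?_
  rintro K ⟨hK, hKc⟩ L ⟨hL, hLc⟩
  calc volume K + volume L ≤ volume (insert a K) + volume (insert b L) := by
        gcongr <;> exact Set.subset_insert _ _
    _ ≤ volume C := by
        refine bm_compact (hKc.insert a) (hLc.insert b) (Set.insert_nonempty _ _)
          (Set.insert_nonempty _ _) (subset_trans (Set.add_subset_add ?_ ?_) hC)
        · exact Set.insert_subset ha hK
        · exact Set.insert_subset hb hL

lemma bm_weighted {A B C : Set ℝ} (hA : MeasurableSet A) (hB : MeasurableSet B)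
    (hA0 : A.Nonempty) (hB0 : B.Nonempty) {t : ℝ} (ht0 : 0 < t) (ht1 : t < 1)
    (hC : ∀ a ∈ A, ∀ b ∈ B, (1 - t) * a + t * b ∈ C) :
    ENNReal.ofReal (1 - t) * volume A + ENNReal.ofReal t * volume B ≤ volume C := by
  have h1 : volume ((1 - t) • A) = ENNReal.ofReal (1 - t) * volume A := by
    rw [Measure.addHaar_smul]; simp [abs_of_pos (sub_pos.2 ht1)]
  have h2 : volume (t • B) = ENNReal.ofReal t * volume B := by
    rw [Measure.addHaar_smul]; simp [abs_of_pos ht0]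
  rw [← h1, ← h2]
  refine bm_measurable (hA.const_smul₀ _) (hB.const_smul₀ _) hA0.smul_set hB0.smul_set ?_
  rintro _ ⟨_, ⟨a, ha, rfl⟩, _, ⟨b, hb, rfl⟩, rfl⟩
  exact hC a ha b hb

lemma geom_le_arith (a b : ℝ≥0∞) {t : ℝ} (ht0 : 0 < t) (ht1 : t < 1) :
    a ^ (1 - t) * b ^ t ≤ ENNReal.ofReal (1 - t) * a + ENNReal.ofReal t * b := by
  have h1t : 0 < 1 - t := by linarith
  have hpq : (1 - t)⁻¹.HolderConjugate t⁻¹ := by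
    rw [Real.holderConjugate_iff]
    refine ⟨(one_lt_inv₀ h1t).2 (by linarith), by simp⟩
  have h := ENNReal.young_inequality (a ^ (1 - t)) (b ^ t) hpq
  rw [← ENNReal.rpow_mul, ← ENNReal.rpow_mul, mul_inv_cancel₀ h1t.ne', mul_inv_cancel₀ ht0.ne',
    ENNReal.rpow_one, ENNReal.rpow_one, ENNReal.ofReal_inv_of_pos h1t,
    ENNReal.ofReal_inv_of_pos ht0, div_eq_mul_inv, div_eq_mul_inv, inv_inv, inv_inv] at h
  rwa [mul_comm _ a, mul_comm _ b]

/-- One-dimensional Prékopa–Leindler, in its stronger arithmetic-mean form, for functions with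
supremum `1`: the superlevel sets of `f`, `g`, `h` at each height `l < 1` satisfy the hypotheses
of one-dimensional Brunn–Minkowski, and the layer-cake formula integrates over `l`. -/
lemma pl_one_normalised {t : ℝ} (ht0 : 0 < t) (ht1 : t < 1) {f g h : ℝ → ℝ≥0∞}
    (hf : Measurable f) (hg : Measurable g) (hh : Measurable h)
    (hfs : ⨆ x, f x = 1) (hgs : ⨆ x, g x = 1)
    (H : ∀ x y, f x ^ (1 - t) * g y ^ t ≤ h ((1 - t) * x + t * y)) :
    ENNReal.ofReal (1 - t) * (∫⁻ x, f x) + ENNReal.ofReal t * (∫⁻ x, g x) ≤ ∫⁻ x, h x := by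
  have h1t : 0 < 1 - t := by linarith
  have hf1 : ∀ x, f x ≤ 1 := fun x => hfs ▸ le_iSup f x
  have hg1 : ∀ x, g x ≤ 1 := fun x => hgs ▸ le_iSup g x
  have layer : ∀ u : ℝ → ℝ≥0∞, Measurable u → (∀ x, u x ≤ 1) →
      ∫⁻ x, u x = ∫⁻ l in Set.Ioi (0 : ℝ), volume {x | ENNReal.ofReal l < u x} := by
    intro u hu hu1
    have e := lintegral_eq_lintegral_meas_lt (μ := (volume : Measure ℝ))
      (f := fun x => (u x).toReal) (ae_of_all _ fun x => ENNReal.toReal_nonneg)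
      hu.ennreal_toReal.aemeasurable
    have e2 : ∀ x, ENNReal.ofReal (u x).toReal = u x := fun x =>
      ENNReal.ofReal_toReal ((hu1 x).trans_lt ENNReal.one_lt_top).ne
    simp only [e2] at e
    rw [e]
    refine setLIntegral_congr_fun measurableSet_Ioi fun l hl => ?_
    congr 1
    ext x
    exact (ENNReal.ofReal_lt_iff_lt_toReal (le_of_lt hl)
      ((hu1 x).trans_lt ENNReal.one_lt_top).ne).symm
  have hmin : ∀ x, min (h x) 1 ≤ 1 := fun x => min_le_right _ _
  calc ENNReal.ofReal (1 - t) * (∫⁻ x, f x) + ENNReal.ofReal t * (∫⁻ x, g x)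
      = ∫⁻ l in Set.Ioi (0 : ℝ), (ENNReal.ofReal (1 - t) * volume {x | ENNReal.ofReal l < f x}
          + ENNReal.ofReal t * volume {x | ENNReal.ofReal l < g x}) := by
        have mono : ∀ u : ℝ → ℝ≥0∞, Measurable fun l : ℝ => volume {x | ENNReal.ofReal l < u x} := by
          intro u
          refine Antitone.measurable fun a b hab => measure_mono fun x hx => ?_
          exact lt_of_le_of_lt (ENNReal.ofReal_le_ofReal hab) hx
        rw [layer f hf hf1, layer g hg hg1, lintegral_add_left ((mono f).const_mul _),
          lintegral_const_mul _ (mono f), lintegral_const_mul _ (mono g)]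
    _ ≤ ∫⁻ l in Set.Ioi (0 : ℝ), volume {x | ENNReal.ofReal l < min (h x) 1} := by
        refine setLIntegral_mono' measurableSet_Ioi fun l hl => ?_
        rcases lt_or_ge (ENNReal.ofReal l) 1 with hl1 | hl1
        · have hA0 : {x | ENNReal.ofReal l < f x}.Nonempty := by
            obtain ⟨x, hx⟩ := lt_iSup_iff.1 (hfs.symm ▸ hl1)
            exact ⟨x, hx⟩
          have hB0 : {x | ENNReal.ofReal l < g x}.Nonempty := by
            obtain ⟨x, hx⟩ := lt_iSup_iff.1 (hgs.symm ▸ hl1)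
            exact ⟨x, hx⟩
          refine bm_weighted (measurableSet_lt measurable_const hf)
            (measurableSet_lt measurable_const hg) hA0 hB0 ht0 ht1 ?_
          intro a ha b hb
          simp only [Set.mem_ofPred_eq, lt_min_iff] at *
          refine ⟨lt_of_lt_of_le ?_ (H a b), hl1⟩
          calc ENNReal.ofReal l = ENNReal.ofReal l ^ (1 - t) * ENNReal.ofReal l ^ t := by
                rw [← ENNReal.rpow_add_of_nonneg _ _ h1t.le ht0.le]; simp
            _ < _ := ENNReal.mul_lt_mul (ENNReal.rpow_lt_rpow ha h1t) (ENNReal.rpow_lt_rpow hb ht0)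
        · have e1 : {x | ENNReal.ofReal l < f x} = ∅ := by
            ext x; simpa using (hf1 x).trans hl1
          have e2 : {x | ENNReal.ofReal l < g x} = ∅ := by
            ext x; simpa using (hg1 x).trans hl1
          simp [e1, e2]
    _ = ∫⁻ x, min (h x) 1 := (layer _ (hh.min measurable_const) hmin).symm
    _ ≤ ∫⁻ x, h x := lintegral_mono fun x => min_le_left _ _

lemma pl_one_bounded {t : ℝ} (ht0 : 0 < t) (ht1 : t < 1) {f g h : ℝ → ℝ≥0∞}
    (hf : Measurable f) (hg : Measurable g) (hh : Measurable h)
    (hfs : ⨆ x, f x ≠ ∞) (hgs : ⨆ x, g x ≠ ∞)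
    (H : ∀ x y, f x ^ (1 - t) * g y ^ t ≤ h ((1 - t) * x + t * y)) :
    (∫⁻ x, f x) ^ (1 - t) * (∫⁻ x, g x) ^ t ≤ ∫⁻ x, h x := by
  have h1t : 0 < 1 - t := by linarith
  set a := ⨆ x, f x with ha
  set b := ⨆ x, g x with hb
  rcases eq_or_ne a 0 with ha0 | ha0
  · have : ∀ x, f x = 0 := fun x => le_antisymm (ha0 ▸ le_iSup f x) zero_le
    simp [this, ENNReal.zero_rpow_of_pos h1t]
  rcases eq_or_ne b 0 with hb0 | hb0
  · have : ∀ x, g x = 0 := fun x => le_antisymm (hb0 ▸ le_iSup g x) zero_le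
    simp [this, ENNReal.zero_rpow_of_pos ht0]
  set c := a ^ (1 - t) * b ^ t with hc
  have hc0 : c ≠ 0 := mul_ne_zero (by simp [ENNReal.rpow_eq_zero_iff, ha0, hfs])
    (by simp [ENNReal.rpow_eq_zero_iff, hb0, hgs])
  have hct : c ≠ ∞ := ENNReal.mul_ne_top (ENNReal.rpow_ne_top_of_nonneg h1t.le hfs)
    (ENNReal.rpow_ne_top_of_nonneg ht0.le hgs)
  have hcinv : c⁻¹ = (a⁻¹) ^ (1 - t) * (b⁻¹) ^ t := by
    rw [hc, ENNReal.mul_inv, ENNReal.inv_rpow, ENNReal.inv_rpow]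
    · left; simp [ENNReal.rpow_eq_zero_iff, ha0, hfs]
    · left; exact ENNReal.rpow_ne_top_of_nonneg h1t.le hfs
  have key := pl_one_normalised ht0 ht1 (f := fun x => a⁻¹ * f x) (g := fun x => b⁻¹ * g x)
    (h := fun x => c⁻¹ * h x) (hf.const_mul _) (hg.const_mul _) (hh.const_mul _)
    (by rw [← ENNReal.mul_iSup, ← ha, ENNReal.inv_mul_cancel ha0 hfs])
    (by rw [← ENNReal.mul_iSup, ← hb, ENNReal.inv_mul_cancel hb0 hgs])
    (by
      intro x y
      rw [ENNReal.mul_rpow_of_nonneg _ _ h1t.le, ENNReal.mul_rpow_of_nonneg _ _ ht0.le, hcinv,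
        mul_mul_mul_comm]
      gcongr
      exact H x y)
  have key2 := (geom_le_arith _ _ ht0 ht1).trans key
  rw [lintegral_const_mul _ hf, lintegral_const_mul _ hg, lintegral_const_mul _ hh,
    ENNReal.mul_rpow_of_nonneg _ _ h1t.le, ENNReal.mul_rpow_of_nonneg _ _ ht0.le,
    mul_mul_mul_comm, ← hcinv] at key2
  exact (ENNReal.mul_le_mul_iff_right (ENNReal.inv_ne_zero.2 hct) (ENNReal.inv_ne_top.2 hc0)).1 key2

/-- One-dimensional Prékopa–Leindler; unbounded functions are truncated at height `n → ∞`. -/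
lemma pl_one {t : ℝ} (ht0 : 0 < t) (ht1 : t < 1) {f g h : ℝ → ℝ≥0∞}
    (hf : Measurable f) (hg : Measurable g) (hh : Measurable h)
    (H : ∀ x y, f x ^ (1 - t) * g y ^ t ≤ h ((1 - t) * x + t * y)) :
    (∫⁻ x, f x) ^ (1 - t) * (∫⁻ x, g x) ^ t ≤ ∫⁻ x, h x := by
  have h1t : 0 < 1 - t := by linarith
  have trunc : ∀ u : ℝ → ℝ≥0∞, Measurable u →
      Tendsto (fun n : ℕ => ∫⁻ x, min (u x) n) atTop (nhds (∫⁻ x, u x)) := by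
    intro u hu
    refine lintegral_tendsto_of_tendsto_of_monotone (fun n => (hu.min measurable_const).aemeasurable)
      (ae_of_all _ fun x m n hmn => min_le_min le_rfl (by exact_mod_cast hmn))
      (ae_of_all _ fun x => ?_)
    have : Tendsto (fun n : ℕ => min (u x) (n : ℝ≥0∞)) atTop (nhds (min (u x) ∞)) :=
      tendsto_const_nhds.min ENNReal.tendsto_nat_nhds_top
    simpa using this
  have step : ∀ n : ℕ, (∫⁻ x, min (f x) n) ^ (1 - t) * (∫⁻ x, min (g x) n) ^ t ≤ ∫⁻ x, h x := by
    intro n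
    refine pl_one_bounded ht0 ht1 (hf.min measurable_const) (hg.min measurable_const) hh ?_ ?_ ?_
    · exact ne_top_of_le_ne_top (ENNReal.natCast_ne_top n) (iSup_le fun x => min_le_right _ _)
    · exact ne_top_of_le_ne_top (ENNReal.natCast_ne_top n) (iSup_le fun x => min_le_right _ _)
    · intro x y
      refine le_trans ?_ (H x y)
      gcongr <;> exact min_le_left _ _
  rcases eq_or_ne (∫⁻ x, f x) 0 with hf0 | hf0
  · simp [hf0, ENNReal.zero_rpow_of_pos h1t]
  rcases eq_or_ne (∫⁻ x, g x) 0 with hg0 | hg0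
  · simp [hg0, ENNReal.zero_rpow_of_pos ht0]
  refine le_of_tendsto' (ENNReal.Tendsto.mul ((trunc f hf).ennrpow_const (1 - t)) ?_
    ((trunc g hg).ennrpow_const t) ?_) step
  · left; simp [ENNReal.rpow_eq_zero_iff, hf0, h1t.not_gt]
  · left; simp [ENNReal.rpow_eq_zero_iff, hg0, ht0.not_gt]

/-- The Prékopa–Leindler inequality on `ℝⁿ`, by induction on the dimension via Fubini. -/
theorem prekopa_leindler {t : ℝ} (ht0 : 0 < t) (ht1 : t < 1) :
    ∀ (n : ℕ) {f g h : (Fin n → ℝ) → ℝ≥0∞} (_ : Measurable f) (_ : Measurable g)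
    (_ : Measurable h) (_ : ∀ x y, f x ^ (1 - t) * g y ^ t ≤ h ((1 - t) • x + t • y)),
    (∫⁻ x, f x) ^ (1 - t) * (∫⁻ x, g x) ^ t ≤ ∫⁻ x, h x := by
  intro n
  induction n with
  | zero =>
    intro f g h hf hg hh H
    have e : ∀ u : (Fin 0 → ℝ) → ℝ≥0∞, ∫⁻ x, u x = u 0 := by
      intro u
      have : (volume : Measure (Fin 0 → ℝ)) = Measure.dirac 0 := by
        rw [volume_pi]; exact Measure.pi_of_empty _ _
      rw [this, lintegral_dirac]
    rw [e, e, e]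
    simpa using H 0 0
  | succ n ih =>
    intro f g h hf hg hh H
    have e : ∀ u : (Fin (n + 1) → ℝ) → ℝ≥0∞, Measurable u →
        ∫⁻ x, u x = ∫⁻ a : ℝ, ∫⁻ y : Fin n → ℝ, u (Fin.cons a y) := by
      intro u hu
      have mp := (volume_preserving_piFinSuccAbove (fun _ : Fin (n + 1) => ℝ) 0).symm
      rw [← mp.lintegral_comp hu, Measure.volume_eq_prod, lintegral_prod]
      · simp [MeasurableEquiv.piFinSuccAbove, Fin.insertNthEquiv]
      · exact (hu.comp (MeasurableEquiv.measurable _)).aemeasurable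
    have mcons : Measurable fun p : ℝ × (Fin n → ℝ) => (Fin.cons p.1 p.2 : Fin (n + 1) → ℝ) := by
      refine measurable_pi_iff.2 fun i => ?_
      refine Fin.cases ?_ (fun j => ?_) i
      · simpa using measurable_fst
      · simp only [Fin.cons_succ]; fun_prop
    have me : ∀ u : (Fin (n + 1) → ℝ) → ℝ≥0∞, Measurable u →
        Measurable fun a : ℝ => ∫⁻ y : Fin n → ℝ, u (Fin.cons a y) := fun u hu =>
      (hu.comp mcons).lintegral_prod_right'
    have mf : ∀ u : (Fin (n + 1) → ℝ) → ℝ≥0∞, Measurable u → ∀ a : ℝ,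
        Measurable fun y : Fin n → ℝ => u (Fin.cons a y) := fun u hu a =>
      (hu.comp mcons).comp measurable_prodMk_left
    rw [e f hf, e g hg, e h hh]
    refine pl_one ht0 ht1 (me f hf) (me g hg) (me h hh) fun a b => ?_
    refine ih (mf f hf a) (mf g hg b) (mf h hh _) fun x y => ?_
    refine (H _ _).trans (le_of_eq ?_)
    congr 1
    ext i
    refine Fin.cases ?_ (fun j => ?_) i <;> simp

/-- Dimension-free Brunn–Minkowski in its quasi-concave form: if `C` contains `(1 - t) A + t B`,
then its volume is at least the smaller of those of `A` and `B`. -/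
theorem min_volume_le {ι : Type*} [Fintype ι] {A B C : Set (ι → ℝ)} (hA : MeasurableSet A)
    (hB : MeasurableSet B) (hC : MeasurableSet C) {t : ℝ} (ht0 : 0 < t) (ht1 : t < 1)
    (H : ∀ x ∈ A, ∀ y ∈ B, (1 - t) • x + t • y ∈ C) :
    min (volume A) (volume B) ≤ volume C := by
  have h1t : 0 < 1 - t := by linarith
  let e : ι ≃ Fin (Fintype.card ι) := Fintype.equivFin ι
  let E : (Fin (Fintype.card ι) → ℝ) ≃ᵐ (ι → ℝ) :=
    MeasurableEquiv.arrowCongr' e.symm (MeasurableEquiv.refl ℝ)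
  have mp : MeasurePreserving E volume volume :=
    volume_preserving_arrowCongr' e.symm (MeasurableEquiv.refl ℝ) (MeasurePreserving.id volume)
  have hE : ∀ x y, E ((1 - t) • x + t • y) = (1 - t) • E x + t • E y := by
    intro x y; rfl
  rw [← mp.measure_preimage hA.nullMeasurableSet, ← mp.measure_preimage hB.nullMeasurableSet,
    ← mp.measure_preimage hC.nullMeasurableSet]
  have hA' := mp.measurable hA
  have hB' := mp.measurable hB
  have hC' := mp.measurable hC
  have key := prekopa_leindler ht0 ht1 _ (f := (E ⁻¹' A).indicator 1) (g := (E ⁻¹' B).indicator 1)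
    (h := (E ⁻¹' C).indicator 1) (measurable_one.indicator hA') (measurable_one.indicator hB')
    (measurable_one.indicator hC') (by
      intro x y
      by_cases hx : x ∈ E ⁻¹' A
      · by_cases hy : y ∈ E ⁻¹' B
        · have : (1 - t) • x + t • y ∈ E ⁻¹' C := by
            rw [Set.mem_preimage, hE]; exact H _ hx _ hy
          simp [Set.indicator_of_mem hx, Set.indicator_of_mem hy, Set.indicator_of_mem this]
        · simp [Set.indicator_of_notMem hy, ENNReal.zero_rpow_of_pos ht0]
      · simp [Set.indicator_of_notMem hx, ENNReal.zero_rpow_of_pos h1t])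
  rw [lintegral_indicator_one hA', lintegral_indicator_one hB', lintegral_indicator_one hC'] at key
  refine le_trans ?_ key
  set m := min (volume (E ⁻¹' A)) (volume (E ⁻¹' B))
  calc m = m ^ (1 - t) * m ^ t := by
        rw [← ENNReal.rpow_add_of_nonneg _ _ h1t.le ht0.le]; simp
    _ ≤ _ := by
        gcongr
        · exact min_le_left _ _
        · exact min_le_right _ _

/-! ### Fibres over boundary values -/

section Gluing
variable {G : Type*} (p : G → Prop) [DecidablePred p]

/-- The function on `G` with values `x` on `{p}` and `y` on the complement. -/
def glue (x : {v // p v} → ℝ) (y : {v // ¬ p v} → ℝ) : G → ℝ :=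
  fun v => if h : p v then x ⟨v, h⟩ else y ⟨v, h⟩

/-- The fibre of `S` over boundary values `x` on `{p}`. -/
def fibre (S : Set (G → ℝ)) (x : {v // p v} → ℝ) : Set ({v // ¬ p v} → ℝ) :=
  {y | glue p x y ∈ S}

lemma mem_fibre {S : Set (G → ℝ)} {x : {v // p v} → ℝ} {y : {v // ¬ p v} → ℝ} :
    y ∈ fibre p S x ↔ glue p x y ∈ S := Iff.rfl

lemma glue_restrict (g : G → ℝ) : glue p (fun v => g v) (fun v => g v) = g := by
  ext v; by_cases h : p v <;> simp [glue, h]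

lemma glue_comb (a b : ℝ) (x x' : {v // p v} → ℝ) (y y' : {v // ¬ p v} → ℝ) :
    glue p (a • x + b • x') (a • y + b • y') = a • glue p x y + b • glue p x' y' := by
  ext v; by_cases h : p v <;> simp [glue, h]

lemma measurePreserving_glue [Fintype G] :
    MeasurePreserving (fun q : ({v // p v} → ℝ) × ({v // ¬ p v} → ℝ) => glue p q.1 q.2)
      volume volume :=
  (volume_preserving_piEquivPiSubtypeProd (fun _ : G => ℝ) p).symm

lemma measurableEmbedding_glue :
    MeasurableEmbedding (fun q : ({v // p v} → ℝ) × ({v // ¬ p v} → ℝ) => glue p q.1 q.2) :=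
  (MeasurableEquiv.piEquivPiSubtypeProd (fun _ : G => ℝ) p).symm.measurableEmbedding

variable {p} [Fintype G] {S : Set (G → ℝ)}

lemma measurableSet_fibre (hS : MeasurableSet S) (x : {v // p v} → ℝ) :
    MeasurableSet (fibre p S x) :=
  ((measurePreserving_glue p).measurable.comp measurable_prodMk_left) hS

lemma measurable_volume_fibre (hS : MeasurableSet S) :
    Measurable fun x => volume (fibre p S x) :=
  measurable_measure_prodMk_left ((measurePreserving_glue p).measurable hS)

/-- For convex `S` the volume of the fibre over `x` is a quasi-concave function of `x`. -/
lemma convex_le_volume_fibre (hS : MeasurableSet S) (hSc : Convex ℝ S) (c : ℝ≥0∞) :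
    Convex ℝ {x | c ≤ volume (fibre p S x)} := by
  rw [convex_iff_forall_pos]
  intro x hx y hy a b ha hb hab
  have ha' : a = 1 - b := by linarith
  subst ha'
  refine le_trans (le_min hx hy) (min_volume_le (measurableSet_fibre hS _)
    (measurableSet_fibre hS _) (measurableSet_fibre hS _) hb (by linarith) ?_)
  intro u hu v hv
  rw [mem_fibre, glue_comb]
  exact hSc hu hv ha.le hb.le hab

/-- For `S` invariant under adding constants, all fibres over constant boundary values have the
same volume. -/
lemma fibre_const (hSconst : ∀ g ∈ S, ∀ c : ℝ, (fun v => g v + c) ∈ S) (c : ℝ) :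
    volume (fibre p S (fun _ => c)) = volume (fibre p S 0) := by
  have : fibre p S (fun _ => c) = (fun y => y + fun _ => -c) ⁻¹' (fibre p S 0) := by
    ext y
    rw [Set.mem_preimage, mem_fibre, mem_fibre]
    have e1 : glue p 0 (y + fun _ => -c) = fun v => glue p (fun _ => c) y v + -c := by
      ext v; by_cases h : p v <;> simp [glue, h]
    constructor
    · intro h; rw [e1]; exact hSconst _ h _
    · intro h
      rw [e1] at h
      simpa using hSconst _ h c
  rw [this, measure_preimage_add_right]

/-- The functions in `S` whose mean lies in `[-1, 1]`. For `S` invariant under adding constants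
this full-dimensional set replaces the hyperplane section `{g ∈ S | ∑ v, g v = 0}`. -/
def slab (S : Set (G → ℝ)) : Set (G → ℝ) := {g | g ∈ S ∧ |∑ v, g v| ≤ Fintype.card G}

lemma measurableSet_slab (hS : MeasurableSet S) : MeasurableSet (slab S) := by
  have h : Measurable fun g : G → ℝ => |∑ v, g v| := by fun_prop
  have h' : slab S = S ∩ {g | |∑ v, g v| ≤ Fintype.card G} := rfl
  rw [h']
  exact hS.inter (measurableSet_le h measurable_const)

/-- The fibre over zero boundary values is controlled by the whole set: shrinking a function
of the fibre by `1 - δ` leaves room to move each boundary value independently in an interval of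
length `δ`. The resulting functions have mean at most `M` in absolute value, so they are covered
by `2 M + 1` translates of the slab by integer constants. -/
theorem volume_fibre_le (hSconst : ∀ g ∈ S, ∀ c : ℝ, (fun v => g v + c) ∈ S)
    {δ : ℝ} (hδ0 : 0 < δ) (hδ1 : δ < 1)
    (hthick : ∀ g ∈ S, ∀ h : G → ℝ, (∀ v, |h v| ≤ δ / 2) → (1 - δ) • g + h ∈ S)
    {v₀ : G} (hv₀ : p v₀) {M : ℕ} (hosc : ∀ g ∈ S, ∀ v, |g v - g v₀| + 1 ≤ M) :
    ENNReal.ofReal δ ^ Fintype.card {v // p v} *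
      (ENNReal.ofReal (1 - δ) ^ Fintype.card {v // ¬ p v} * volume (fibre p S 0)) ≤
      (2 * M + 1) * volume (slab S) := by
  classical
  set box : Set ({v // p v} → ℝ) := Set.Icc (fun _ => -(δ / 2)) (fun _ => δ / 2) with hbox
  have hboxv : volume box = ENNReal.ofReal δ ^ Fintype.card {v // p v} := by
    rw [hbox, Real.volume_Icc_pi]
    simp
  have hsm : volume ((1 - δ) • fibre p S 0) =
      ENNReal.ofReal (1 - δ) ^ Fintype.card {v // ¬ p v} * volume (fibre p S 0) := by
    rw [Measure.addHaar_smul]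
    simp [abs_of_pos (sub_pos.2 hδ1), ENNReal.ofReal_pow (sub_pos.2 hδ1).le]
  set Z : Set (({v // p v} → ℝ) × ({v // ¬ p v} → ℝ)) := box ×ˢ ((1 - δ) • fibre p S 0) with hZ
  set γ := fun q : ({v // p v} → ℝ) × ({v // ¬ p v} → ℝ) => glue p q.1 q.2 with hγ
  have hvol : volume (γ '' Z) = volume Z := by
    rw [← (measurePreserving_glue p).measure_preimage_emb (measurableEmbedding_glue p),
      Set.preimage_image_eq _ (measurableEmbedding_glue p).injective]
  rw [← hboxv, ← hsm, ← Measure.prod_prod, ← Measure.volume_eq_prod, ← hZ, ← hvol]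
  have hN : (0 : ℝ) < Fintype.card G := by exact_mod_cast Fintype.card_pos_iff.2 ⟨v₀⟩
  have hcover : γ '' Z ⊆ ⋃ j ∈ Finset.Icc (-(M : ℤ)) M,
      (fun g : G → ℝ => g + fun _ => (-(j : ℝ))) ⁻¹' slab S := by
    rintro _ ⟨⟨x, _⟩, ⟨hx, ⟨y, hy, rfl⟩⟩, rfl⟩
    have hxb : ∀ v, |x v| ≤ δ / 2 := fun v => abs_le.2 ⟨hx.1 v, hx.2 v⟩
    have hg : γ (x, (1 - δ) • y) = (1 - δ) • glue p 0 y + glue p x 0 := by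
      have := glue_comb p (1 - δ) 1 0 x y 0
      simpa [hγ] using this
    have hgS : γ (x, (1 - δ) • y) ∈ S := by
      rw [hg]
      refine hthick _ hy _ fun v => ?_
      by_cases h : p v
      · simpa [glue, h] using hxb ⟨v, h⟩
      · simpa [glue, h] using (half_pos hδ0).le
    change γ (x, (1 - δ) • y) ∈ _
    set g := γ (x, (1 - δ) • y)
    have hg0 : |g v₀| ≤ 1 := by
      have e : g v₀ = x ⟨v₀, hv₀⟩ := by simp [g, hγ, glue, hv₀]
      rw [e]; exact (hxb _).trans (by linarith)
    have hgM : ∀ v, |g v| ≤ M := fun v => by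
      have h1 := hosc g hgS v
      have h2 := abs_add_le (g v - g v₀) (g v₀)
      rw [sub_add_cancel] at h2
      linarith
    have hsum : |∑ v, g v| ≤ Fintype.card G * M := by
      refine (Finset.abs_sum_le_sum_abs _ _).trans ((Finset.sum_le_sum fun v _ => hgM v).trans ?_)
      simp [Finset.card_univ]
    set m := (∑ v, g v) / Fintype.card G with hm
    have hmN : ∑ v, g v = Fintype.card G * m := by rw [hm]; field_simp
    have hmM : |m| ≤ M := by
      rw [hm, abs_div, abs_of_pos hN, div_le_iff₀ hN]; linarith
    rw [abs_le] at hmM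
    have f1 := Int.floor_le m
    have f2 := Int.lt_floor_add_one m
    simp only [Set.mem_iUnion]
    refine ⟨⌊m⌋, Finset.mem_Icc.2 ⟨Int.le_floor.2 (by push_cast; exact hmM.1), ?_⟩, ?_, ?_⟩
    · have : (⌊m⌋ : ℝ) ≤ (M : ℤ) := by push_cast; linarith
      exact_mod_cast this
    · exact hSconst g hgS _
    · have e : ∑ v, (g + fun _ : G => (-(⌊m⌋ : ℝ))) v = Fintype.card G * (m - ⌊m⌋) := by
        simp only [Pi.add_apply, Finset.sum_add_distrib, hmN, Finset.sum_const, Finset.card_univ,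
          nsmul_eq_mul]
        ring
      rw [e, abs_le]
      constructor <;> nlinarith
  refine (measure_mono hcover).trans ((measure_biUnion_finset_le _ _).trans (le_of_eq ?_))
  simp only [measure_preimage_add_right, Finset.sum_const, nsmul_eq_mul, Int.card_Icc]
  congr 1
  have : ((M : ℤ) + 1 - -(M : ℤ)).toNat = 2 * M + 1 := by omega
  rw [this]; push_cast; rfl

end Gluing

section Averaging
variable {G : Type*} [AddCommGroup G] [Fintype G] {p : G → Prop} [DecidablePred p]
  {S : Set (G → ℝ)}

/-- The average over all translates of `g` is constant, so by quasi-concavity of the fibre volume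
some translate of `g` has a fibre no larger than the one over constant boundary values. -/
lemma exists_translate_fibre_le (hS : MeasurableSet S) (hSc : Convex ℝ S)
    (hSconst : ∀ g ∈ S, ∀ c : ℝ, (fun v => g v + c) ∈ S) (g : G → ℝ) :
    ∃ w : G, volume (fibre p S fun v => g (v + w)) ≤ volume (fibre p S 0) := by
  obtain ⟨w, -, hw⟩ := Finset.exists_min_image Finset.univ
    (fun w : G => volume (fibre p S fun v => g (v + w))) ⟨0, Finset.mem_univ _⟩
  refine ⟨w, ?_⟩
  have hN : (0 : ℝ) < Fintype.card G := by exact_mod_cast Fintype.card_pos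
  have key := (convex_le_volume_fibre (p := p) hS hSc
    (volume (fibre p S fun v => g (v + w)))).sum_mem (t := (Finset.univ : Finset G))
    (w := fun _ => (Fintype.card G : ℝ)⁻¹) (z := fun w (v : {v // p v}) => g (v + w))
    (fun _ _ => by positivity) (by simp [hN.ne']) (fun w' hw' => hw w' hw')
  have e : (∑ i : G, (Fintype.card G : ℝ)⁻¹ • fun v : {v // p v} => g (v + i)) =
      fun _ => (Fintype.card G : ℝ)⁻¹ * ∑ i, g i := by
    ext v
    simp only [Finset.sum_apply, Pi.smul_apply, smul_eq_mul, ← Finset.mul_sum]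
    congr 1
    exact Equiv.sum_comp (Equiv.addLeft (v : G)) g
  rw [e] at key
  rwa [← fibre_const hSconst]

/-- For a convex set invariant under translations and adding constants, the whole volume is
controlled by the fibre over zero boundary values. Writing `F` for the fibre volume,
`exists_translate_fibre_le` gives `1 / F 0 ≤ ∑ w, 1 / F (g (· + w))`; integrating over the slab,
the translates contribute equally, and the integral of `1 / F` over the slab is at most the
volume `(2 R) ^ #p` of the set of possible boundary values. -/
theorem volume_slab_le (hS : MeasurableSet S) (hSc : Convex ℝ S)
    (hSconst : ∀ g ∈ S, ∀ c : ℝ, (fun v => g v + c) ∈ S)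
    (hStrans : ∀ g ∈ S, ∀ w : G, (fun v => g (v + w)) ∈ S) {R : ℝ} (hR : 0 < R)
    (hbound : ∀ g ∈ slab S, ∀ v, |g v| ≤ R) :
    volume (slab S) ≤ Fintype.card G * ENNReal.ofReal (2 * R) ^ Fintype.card {v // p v} *
      volume (fibre p S 0) := by
  classical
  set F : ({v // p v} → ℝ) → ℝ≥0∞ := fun x => volume (fibre p S x) with hF
  have hFm : Measurable F := measurable_volume_fibre hS
  have hslab := measurableSet_slab hS
  have mres : Measurable fun (g : G → ℝ) (v : {v // p v}) => g v := by fun_prop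
  have mFi : Measurable fun g : G → ℝ => (F fun v => g v)⁻¹ := (hFm.comp mres).inv
  have mtr : ∀ w : G, Measurable fun (g : G → ℝ) (v : G) => g (v + w) := fun w => by fun_prop
  have mp : ∀ w : G, MeasurePreserving (fun (g : G → ℝ) (v : G) => g (v + w)) volume volume :=
    fun w => volume_preserving_arrowCongr' (Equiv.addRight w).symm (MeasurableEquiv.refl ℝ)
      (MeasurePreserving.id volume)
  have hpre : ∀ w : G, (fun (g : G → ℝ) (v : G) => g (v + w)) ⁻¹' slab S = slab S := by
    intro w
    ext g
    have hsum : ∀ w, ∑ v, g (v + w) = ∑ v, g v := fun w =>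
      Equiv.sum_comp (Equiv.addRight w) g
    constructor
    · rintro ⟨h1, h2⟩
      refine ⟨?_, by rwa [hsum] at h2⟩
      simpa [add_assoc] using hStrans _ h1 (-w)
    · rintro ⟨h1, h2⟩
      exact ⟨hStrans _ h1 w, by rwa [hsum]⟩
  set box : Set ({v // p v} → ℝ) := Set.Icc (fun _ => -R) (fun _ => R) with hbox
  have hboxm : MeasurableSet box := measurableSet_Icc
  have hboxv : volume box = ENNReal.ofReal (2 * R) ^ Fintype.card {v // p v} := by
    rw [hbox, Real.volume_Icc_pi]
    simp [two_mul]
  have main : volume (slab S) / F 0 ≤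
      Fintype.card G * ENNReal.ofReal (2 * R) ^ Fintype.card {v // p v} := by
    calc volume (slab S) / F 0 = ∫⁻ g in slab S, (F 0)⁻¹ := by
          rw [setLIntegral_const, div_eq_mul_inv, mul_comm]
      _ ≤ ∫⁻ g in slab S, ∑ w : G, (F fun v => g (v + w))⁻¹ := by
          refine lintegral_mono fun g => ?_
          obtain ⟨w, hw⟩ := exists_translate_fibre_le (p := p) hS hSc hSconst g
          exact (ENNReal.inv_le_inv.2 hw).trans
            (Finset.single_le_sum (f := fun w : G => (F fun v => g (v + w))⁻¹)
              (fun _ _ => zero_le) (Finset.mem_univ w))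
      _ = ∑ w : G, ∫⁻ g in slab S, (F fun v => g (v + w))⁻¹ := by
          refine lintegral_finsetSum _ fun w _ => ?_
          exact (hFm.comp (mres.comp (mtr w))).inv
      _ = ∑ w : G, ∫⁻ g in slab S, (F fun v => g v)⁻¹ := by
          refine Finset.sum_congr rfl fun w _ => ?_
          conv_lhs => rw [← hpre w]
          exact (mp w).setLIntegral_comp_preimage (f := fun g => (F fun v => g v)⁻¹) hslab
            mFi
      _ = Fintype.card G * ∫⁻ g in slab S, (F fun v => g v)⁻¹ := by
          simp [Finset.sum_const, Finset.card_univ]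
      _ ≤ Fintype.card G * volume box := by
          gcongr
          rw [← lintegral_indicator hslab,
            ← (measurePreserving_glue p).lintegral_comp
              (mFi.indicator hslab), Measure.volume_eq_prod,
            lintegral_prod]
          swap
          · exact ((mFi.indicator hslab).comp (measurePreserving_glue p).measurable).aemeasurable
          rw [← lintegral_indicator_one hboxm]
          refine lintegral_mono fun x => ?_
          have hres : ∀ y, (fun v : {v // p v} => glue p x y v) = x := by
            intro y; ext v; simp [glue, v.2]
          calc ∫⁻ y, (slab S).indicator (fun g => (F fun v => g v)⁻¹) (glue p x y)
              ≤ ∫⁻ y, (fibre p S x).indicator (fun _ => box.indicator 1 x * (F x)⁻¹) y := by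
                refine lintegral_mono fun y => ?_
                by_cases hy : glue p x y ∈ slab S
                · have hx : x ∈ box := by
                    rw [hbox, Set.mem_Icc, Pi.le_def, Pi.le_def]
                    have := fun v : {v // p v} => abs_le.1 (hbound _ hy v)
                    have e : ∀ v : {v // p v}, glue p x y v = x v := fun v => congrFun (hres y) v
                    simp only [e] at this
                    exact ⟨fun v => (this v).1, fun v => (this v).2⟩
                  have hy' : y ∈ fibre p S x := hy.1
                  simp [Set.indicator_of_mem hy, Set.indicator_of_mem hy',
                    Set.indicator_of_mem hx, hres]
                · simp [Set.indicator_of_notMem hy]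
            _ = box.indicator 1 x * (F x)⁻¹ * F x := by
                rw [lintegral_indicator_const (measurableSet_fibre hS x)]
            _ ≤ box.indicator 1 x := by
                rw [mul_assoc]
                exact mul_le_of_le_one_right zero_le (ENNReal.inv_mul_le_one _)
      _ = _ := by rw [hboxv]
  have hpos : (0 : ℝ≥0∞) < Fintype.card G * ENNReal.ofReal (2 * R) ^ Fintype.card {v // p v} := by
    refine ENNReal.mul_pos (by simp [Fintype.card_ne_zero]) (pow_ne_zero _ ?_)
    simpa using hR
  refine (ENNReal.div_le_iff_le_mul (Or.inr ?_) (Or.inr hpos.ne')).1 main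
  exact ENNReal.mul_ne_top (by simp) (ENNReal.pow_ne_top ENNReal.ofReal_ne_top)

end Averaging

/-! ### Comparison of Hausdorff and Lebesgue measure -/

section HausdorffConstant

/-- A set of finite Hausdorff measure has a nearly optimal cover with bounds `ρ i` on the
diameters that are strictly positive, even where the covering set is a point. -/
lemma exists_cover {X : Type*} [EMetricSpace X] [MeasurableSpace X] [BorelSpace X] {d : ℕ}
    (hd : 0 < d) {A : Set X} (hA : μH[d] A ≠ ∞) {r : ℝ} (hr : 0 < r) {ε : ℝ≥0} (hε : 0 < ε) :
    ∃ (t : ℕ → Set X) (ρ : ℕ → ℝ), A ⊆ ⋃ i, t i ∧ (∀ i, 0 < ρ i ∧ ρ i ≤ r) ∧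
      (∀ i, Metric.ediam (t i) ≤ ENNReal.ofReal (ρ i)) ∧
      ∑' i, ENNReal.ofReal (ρ i) ^ d ≤ μH[d] A + ε := by
  have hε2 : (ε / 2 : ℝ≥0) ≠ 0 := (half_pos hε).ne'
  have h1 : (⨅ (t : ℕ → Set X) (_ : A ⊆ ⋃ n, t n)
      (_ : ∀ n, Metric.ediam (t n) ≤ ENNReal.ofReal (r / 2)),
        ∑' n, ⨆ _ : (t n).Nonempty, Metric.ediam (t n) ^ (d : ℝ)) < μH[d] A + (ε / 2 : ℝ≥0) := by
    refine lt_of_le_of_lt ?_ (ENNReal.lt_add_right hA (by exact_mod_cast hε2))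
    rw [Measure.hausdorffMeasure_apply]
    exact le_iSup₂_of_le (ENNReal.ofReal (r / 2)) (by simpa using hr) le_rfl
  simp only [iInf_lt_iff] at h1
  obtain ⟨t, hcov, hdiam, hsum⟩ := h1
  obtain ⟨e, he0, hesum⟩ := ENNReal.exists_pos_sum_of_countable (ι := ℕ)
    (ε := (ε / 2 : ℝ≥0)) (by exact_mod_cast hε2)
  have hchoose : ∀ i, ∃ ρ : ℝ, (0 < ρ ∧ ρ ≤ r) ∧ Metric.ediam (t i) ≤ ENNReal.ofReal ρ ∧
      ENNReal.ofReal ρ ^ d ≤ Metric.ediam (t i) ^ (d : ℝ) + e i := by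
    intro i
    set δ := (Metric.ediam (t i)).toReal with hδ
    have hfin : Metric.ediam (t i) ≠ ∞ := ne_top_of_le_ne_top ENNReal.ofReal_ne_top (hdiam i)
    have hδ0 : 0 ≤ δ := ENNReal.toReal_nonneg
    have hδr : δ < r := by
      have := ENNReal.toReal_le_of_le_ofReal (by positivity) (hdiam i)
      linarith
    have hc : ∀ᶠ ρ in 𝓝[>] δ, ρ ^ d < δ ^ d + e i := by
      have : ContinuousAt (fun x : ℝ => x ^ d) δ := by fun_prop
      exact (this.tendsto.mono_left nhdsWithin_le_nhds).eventually_lt_const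
        (by have := he0 i; simpa using this)
    have hc2 : ∀ᶠ ρ in 𝓝[>] δ, ρ < r := nhdsWithin_le_nhds (eventually_lt_nhds hδr)
    obtain ⟨ρ, ⟨h1, h2⟩, h3⟩ := ((hc.and hc2).and self_mem_nhdsWithin).exists
    have h3' : δ < ρ := h3
    refine ⟨ρ, ⟨by linarith, h2.le⟩, ?_, ?_⟩
    · rw [← ENNReal.ofReal_toReal hfin]
      exact ENNReal.ofReal_le_ofReal h3'.le
    · rw [← ENNReal.ofReal_toReal hfin, ENNReal.rpow_natCast, ← ENNReal.ofReal_pow (by linarith),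
        ← ENNReal.ofReal_pow hδ0, ← ENNReal.ofReal_coe_nnreal (p := e i),
        ← ENNReal.ofReal_add (by positivity) (by positivity)]
      exact ENNReal.ofReal_le_ofReal h1.le
  choose ρ hρ1 hρ2 hρ3 using hchoose
  refine ⟨t, ρ, hcov, hρ1, hρ2, ?_⟩
  have hne : ∀ i, (⨆ _ : (t i).Nonempty, Metric.ediam (t i) ^ (d : ℝ)) =
      Metric.ediam (t i) ^ (d : ℝ) := by
    intro i
    rcases (t i).eq_empty_or_nonempty with h | h
    · simp [h, hd.ne']
    · simp [h]
  simp only [hne] at hsum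
  calc ∑' i, ENNReal.ofReal (ρ i) ^ d ≤ ∑' i, (Metric.ediam (t i) ^ (d : ℝ) + e i) :=
        ENNReal.tsum_le_tsum hρ3
    _ = ∑' i, Metric.ediam (t i) ^ (d : ℝ) + ∑' i, (e i : ℝ≥0∞) := ENNReal.tsum_add
    _ ≤ (μH[d] A + (ε / 2 : ℝ≥0)) + (ε / 2 : ℝ≥0) := add_le_add hsum.le hesum.le
    _ = μH[d] A + ε := by
        rw [add_assoc, ← ENNReal.coe_add, add_halves]

variable {U : Type*} [NormedAddCommGroup U]

/-- The cylinder `A × J` in the Euclidean product `U × ℝ`. -/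
def cyl (A : Set U) (J : Set ℝ) : Set (WithLp 2 (U × ℝ)) := {q | q.fst ∈ A ∧ q.snd ∈ J}

lemma ediam_cyl_le {A : Set U} {a b ρ : ℝ} (hρ : 0 ≤ ρ) (hab : a ≤ b)
    (hA : Metric.ediam A ≤ ENNReal.ofReal ρ) :
    Metric.ediam (cyl A (Set.Icc a b)) ≤ ENNReal.ofReal (ρ + (b - a)) := by
  refine Metric.ediam_le fun q hq q' hq' => ?_
  have h1 : dist q.fst q'.fst ≤ ρ := by
    have := (Metric.edist_le_ediam_of_mem hq.1 hq'.1).trans hA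
    rwa [edist_dist, ENNReal.ofReal_le_ofReal_iff hρ] at this
  have h2 : dist q.snd q'.snd ≤ b - a := Real.dist_le_of_mem_Icc hq.2 hq'.2
  rw [edist_dist]
  refine ENNReal.ofReal_le_ofReal ?_
  rw [WithLp.prod_dist_eq_of_L2]
  refine Real.sqrt_le_iff.2 ⟨by linarith, ?_⟩
  have := @dist_nonneg _ _ q.fst q'.fst
  have := @dist_nonneg _ _ q.snd q'.snd
  nlinarith [mul_nonneg hρ (sub_nonneg.2 hab)]

variable [MeasurableSpace U] [BorelSpace U]

lemma one_add_inv_pow_le {d : ℕ} (hd : 0 < d) : (1 + 1 / (d : ℝ)) ^ (d + 1) ≤ 6 := by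
  have hd1 : (1 : ℝ) ≤ d := by exact_mod_cast hd
  have h1 : (1 + 1 / (d : ℝ)) ^ d ≤ 3 := by
    calc (1 + 1 / (d : ℝ)) ^ d ≤ (Real.exp (1 / d)) ^ d := by
          gcongr; linarith [Real.add_one_le_exp (1 / (d : ℝ))]
      _ = Real.exp 1 := by
          rw [← Real.exp_nat_mul]; congr 1; field_simp
      _ ≤ 3 := by linarith [Real.exp_one_lt_d9]
  have h2 : 1 + 1 / (d : ℝ) ≤ 2 := by
    have : 1 / (d : ℝ) ≤ 1 := by rw [div_le_one (by linarith)]; exact hd1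
    linarith
  rw [pow_succ]
  calc (1 + 1 / (d : ℝ)) ^ d * (1 + 1 / (d : ℝ)) ≤ 3 * 2 := by gcongr
    _ = 6 := by norm_num

/-- The unit cylinder over `A`: each piece of diameter `ρ` in a cover of `A` yields at most
`(d + 1) / ρ` pieces of height `ρ / d`, hence of diameter at most `ρ (1 + 1 / d)`, and
`(1 + 1 / d) ^ (d + 1) ≤ 6`. -/
lemma hausdorff_cyl_le {d : ℕ} (hd : 0 < d) (A : Set U) :
    μH[(d + 1 : ℕ)] (cyl A (Set.Ico 0 1)) ≤ (6 * (d + 1) : ℕ) * μH[d] A := by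
  rcases eq_or_ne (μH[d] A) ∞ with htop | hA
  · rw [htop, ENNReal.mul_top (by simp)]; exact le_top
  refine ENNReal.le_of_forall_pos_le_add fun ε' hε' _ => ?_
  set ε : ℝ≥0 := ε' / (6 * (d + 1) : ℕ) with hεdef
  have hε : 0 < ε := by positivity
  have hgoal : ((6 * (d + 1) : ℕ) : ℝ≥0∞) * μH[d] A + ε' =
      ((6 * (d + 1) : ℕ) : ℝ≥0∞) * (μH[d] A + ε) := by
    generalize 6 * (d + 1) = K at hεdef hε ⊢
    have hK : (K : ℝ≥0) ≠ 0 := by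
      rintro h
      rw [hεdef, h, div_zero] at hε
      exact lt_irrefl _ hε
    rw [mul_add, hεdef, ← ENNReal.coe_natCast, ← ENNReal.coe_mul, mul_div_cancel₀ _ hK]
  rw [hgoal]
  have hd0 : (0 : ℝ) < d := by exact_mod_cast hd
  have hr : ∀ m : ℕ, (0 : ℝ) < 1 / ((m : ℝ) + 1) := fun m => by positivity
  choose t ρ hcov hρ hdiam hsum using fun m : ℕ => exists_cover hd hA (hr m) hε
  have hρ1 : ∀ m i, ρ m i ≤ 1 := fun m i => (hρ m i).2.trans (by
    rw [div_le_one (by positivity)]; linarith [Nat.cast_nonneg (α := ℝ) m])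
  let N : ℕ → ℕ → ℕ := fun m i => ⌈d / ρ m i⌉₊
  let T : ∀ m : ℕ, (Σ i : ℕ, Fin (N m i)) → Set (WithLp 2 (U × ℝ)) := fun m q =>
    cyl (t m q.1) (Set.Icc (q.2 * (ρ m q.1 / d)) ((q.2 + 1) * (ρ m q.1 / d)))
  have hT : ∀ m q, Metric.ediam (T m q) ≤ ENNReal.ofReal (ρ m q.1 * (1 + 1 / d)) := by
    intro m q
    have hl : 0 < ρ m q.1 / d := div_pos (hρ m q.1).1 hd0
    refine (ediam_cyl_le (hρ m q.1).1.le (by nlinarith) (hdiam m q.1)).trans (le_of_eq ?_)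
    congr 1; ring
  refine (Measure.hausdorffMeasure_le_liminf_tsum _ _ (l := atTop)
    (fun m : ℕ => ENNReal.ofReal (1 / ((m : ℝ) + 1) * 2)) ?_ T ?_ ?_).trans ?_
  · have h := (tendsto_one_div_add_atTop_nhds_zero_nat (𝕜 := ℝ)).mul_const 2
    rw [zero_mul] at h
    simpa using ENNReal.tendsto_ofReal h
  · refine Eventually.of_forall fun m q => (hT m q).trans (ENNReal.ofReal_le_ofReal ?_)
    have : 1 / (d : ℝ) ≤ 1 := by
      rw [div_le_one hd0]; exact_mod_cast hd
    have := (hρ m q.1).1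
    exact mul_le_mul (hρ m q.1).2 (by linarith) (by positivity) (hr m).le
  · refine Eventually.of_forall fun m q hq => ?_
    obtain ⟨i, hi⟩ := Set.mem_iUnion.1 (hcov m hq.1)
    have hl : 0 < ρ m i / d := div_pos (hρ m i).1 hd0
    have hx0 : 0 ≤ q.snd := hq.2.1
    have hx1 : q.snd < 1 := hq.2.2
    have f1 := Nat.floor_le (div_nonneg hx0 hl.le)
    have f2 := Nat.lt_floor_add_one (q.snd / (ρ m i / d))
    have hj : ⌊q.snd / (ρ m i / d)⌋₊ < N m i := by
      rw [Nat.floor_lt (div_nonneg hx0 hl.le)]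
      refine lt_of_lt_of_le ?_ (Nat.le_ceil _)
      rw [div_div_eq_mul_div]
      have := (hρ m i).1
      gcongr
      nlinarith
    refine Set.mem_iUnion.2 ⟨⟨i, ⟨_, hj⟩⟩, hi, ?_, ?_⟩
    · exact (le_div_iff₀ hl).1 f1
    · exact ((div_lt_iff₀ hl).1 f2).le
  · refine (liminf_le_liminf (v := fun _ => ((6 * (d + 1) : ℕ) : ℝ≥0∞) * (μH[d] A + ε))
      (Eventually.of_forall fun m => ?_)).trans (by simp)
    calc ∑' q, Metric.ediam (T m q) ^ ((d + 1 : ℕ) : ℝ)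
        ≤ ∑' q : (Σ i : ℕ, Fin (N m i)), ENNReal.ofReal (ρ m q.1 * (1 + 1 / d)) ^ (d + 1) := by
          refine ENNReal.tsum_le_tsum fun q => ?_
          rw [ENNReal.rpow_natCast]
          gcongr
          exact hT m q
      _ = ∑' i, ∑' _ : Fin (N m i), ENNReal.ofReal (ρ m i * (1 + 1 / d)) ^ (d + 1) :=
          ENNReal.tsum_sigma' _
      _ ≤ ∑' i, ((6 * (d + 1) : ℕ) : ℝ≥0∞) * ENNReal.ofReal (ρ m i) ^ d := by
          refine ENNReal.tsum_le_tsum fun i => ?_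
          have hρ0 := (hρ m i).1
          rw [tsum_fintype, Finset.sum_const, Finset.card_univ, Fintype.card_fin, nsmul_eq_mul,
            ← ENNReal.ofReal_pow (by positivity), ← ENNReal.ofReal_pow (by positivity),
            ← ENNReal.ofReal_natCast, ← ENNReal.ofReal_natCast (6 * (d + 1)),
            ← ENNReal.ofReal_mul (by positivity), ← ENNReal.ofReal_mul (by positivity)]
          refine ENNReal.ofReal_le_ofReal ?_
          have hN : (N m i : ℝ) ≤ (d + 1) / ρ m i := by
            have h1 := (Nat.ceil_lt_add_one (div_nonneg hd0.le hρ0.le)).le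
            have h2 : 1 ≤ 1 / ρ m i := by rw [le_div_iff₀ hρ0]; linarith [hρ1 m i]
            rw [add_div]; exact h1.trans (by linarith)
          calc (N m i : ℝ) * (ρ m i * (1 + 1 / d)) ^ (d + 1)
              ≤ (d + 1) / ρ m i * (ρ m i ^ (d + 1) * 6) := by
                rw [mul_pow]
                gcongr
                exact one_add_inv_pow_le hd
            _ = ((6 * (d + 1) : ℕ) : ℝ) * ρ m i ^ d := by
                rw [pow_succ]; push_cast; field_simp
      _ = ((6 * (d + 1) : ℕ) : ℝ≥0∞) * ∑' i, ENNReal.ofReal (ρ m i) ^ d := ENNReal.tsum_mul_left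
      _ ≤ _ := by gcongr; exact hsum m

/-- The ratio of Lebesgue measure to the Hausdorff measure `μH[d]` in dimension `d`. Mathlib's
`μH[d]` is not normalised, so for the Euclidean metric this ratio depends on `d`. -/
noncomputable def hratio (d : ℕ) : ℝ≥0 :=
  Measure.addHaarScalarFactor (volume : Measure (EuclideanSpace ℝ (Fin d))) μH[d]

lemma hratio_ne_zero (d : ℕ) : hratio d ≠ 0 :=
  Measure.addHaarScalarFactor_volume_hausdorffMeasure_ne_zero d

lemma volume_eq_hratio_mul [InnerProductSpace ℝ U] [FiniteDimensional ℝ U] {d : ℕ} (hd : Module.finrank ℝ U = d) (A : Set U) :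
    volume A = hratio d * μH[d] A := by
  subst hd
  rw [← InnerProductSpace.euclideanHausdorffMeasure_eq_volume]
  rfl

/-- The unit cube has `μH[d]`-measure at least `1`, since the identity from the Euclidean to the
sup norm is `1`-Lipschitz and `μH[d]` for the sup norm is Lebesgue measure. -/
lemma hratio_le_one (d : ℕ) : hratio d ≤ 1 := by
  set Q : Set (EuclideanSpace ℝ (Fin d)) := WithLp.ofLp ⁻¹' (Set.Icc 0 1) with hQ
  have hQv : volume Q = 1 := by
    rw [hQ, (PiLp.volume_preserving_ofLp (Fin d)).measure_preimage
      measurableSet_Icc.nullMeasurableSet, Real.volume_Icc_pi]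
    simp
  have h1 : (1 : ℝ≥0∞) ≤ μH[d] Q := by
    have := (PiLp.lipschitzWith_ofLp 2 (fun _ : Fin d => ℝ)).hausdorffMeasure_image_le
      (d := (d : ℝ)) (by positivity) Q
    rw [Set.image_preimage_eq _ (WithLp.ofLp_surjective 2)] at this
    have e : (μH[(d : ℝ)] : Measure (Fin d → ℝ)) = volume := by
      simpa using hausdorffMeasure_pi_real (ι := Fin d)
    rw [e, Real.volume_Icc_pi] at this
    simpa using this
  have h2 := volume_eq_hratio_mul (U := EuclideanSpace ℝ (Fin d)) (d := d) (by simp) Q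
  rw [hQv] at h2
  have h3 : (hratio d : ℝ≥0∞) * 1 ≤ 1 :=
    (mul_le_mul_right h1 _).trans h2.symm.le
  rw [mul_one] at h3
  exact_mod_cast h3

lemma hratio_le_succ {d : ℕ} (hd : 0 < d) : hratio d ≤ (6 * (d + 1) : ℕ) * hratio (d + 1) := by
  set Q : Set (EuclideanSpace ℝ (Fin d)) := WithLp.ofLp ⁻¹' (Set.Icc 0 1) with hQ
  have hQv : volume Q = 1 := by
    rw [hQ, (PiLp.volume_preserving_ofLp (Fin d)).measure_preimage
      measurableSet_Icc.nullMeasurableSet, Real.volume_Icc_pi]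
    simp
  have hc : volume (cyl Q (Set.Ico 0 1)) = 1 := by
    have e : cyl Q (Set.Ico 0 1) = WithLp.ofLp ⁻¹' (Q ×ˢ Set.Ico (0 : ℝ) 1) := rfl
    have hm : MeasurableSet Q := (PiLp.volume_preserving_ofLp (Fin d)).measurable measurableSet_Icc
    rw [e, (WithLp.volume_preserving_ofLp _ _).measure_preimage
      (hm.prod measurableSet_Ico).nullMeasurableSet, Measure.volume_eq_prod, Measure.prod_prod, hQv]
    simp
  have h1 := volume_eq_hratio_mul (U := EuclideanSpace ℝ (Fin d)) (d := d) (by simp) Q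
  have h2 := volume_eq_hratio_mul (U := WithLp 2 (EuclideanSpace ℝ (Fin d) × ℝ)) (d := d + 1)
    (by rw [LinearEquiv.finrank_eq (WithLp.linearEquiv 2 ℝ _)]; simp) (cyl Q (Set.Ico 0 1))
  rw [hc] at h2
  rw [hQv] at h1
  have h3 := hausdorff_cyl_le hd Q
  have h4 : (hratio d : ℝ≥0∞) ≤ ((6 * (d + 1) : ℕ) * hratio (d + 1) : ℝ≥0) := by
    calc (hratio d : ℝ≥0∞) = hratio d * (hratio (d + 1) * μH[(d + 1 : ℕ)] (cyl Q (Set.Ico 0 1))) := by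
          rw [← h2, mul_one]
      _ ≤ hratio d * (hratio (d + 1) * ((6 * (d + 1) : ℕ) * μH[d] Q)) := by gcongr
      _ = (6 * (d + 1) : ℕ) * hratio (d + 1) * (hratio d * μH[d] Q) := by ring
      _ = _ := by rw [← h1, mul_one]; norm_cast
  exact_mod_cast h4

end HausdorffConstant

/-! ### Admissible functions on the torus -/

section Torus

variable {n : ℕ} {s : Fin 3 → ℝ} {σ : ℝ}

/-- The functions on the torus whose rhombus second differences are bounded by `s`, without the
normalisation of the sum, as a subset of the product space `Fin n × Fin n → ℝ`. -/
def admissible (n : ℕ) (s : Fin 3 → ℝ) : Set (Fin n × Fin n → ℝ) :=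
  {g | ∀ (i : Fin 3) (v : Fin n × Fin n), rdiff i (WithLp.toLp 2 g) v ≤ s i}

lemma rdiff_toLp_continuous (i : Fin 3) (v : Fin n × Fin n) :
    Continuous fun g : Fin n × Fin n → ℝ => rdiff i (WithLp.toLp 2 g) v := by
  unfold rdiff
  split_ifs <;> fun_prop

lemma rdiff_toLp_comb (i : Fin 3) (v : Fin n × Fin n) (a b : ℝ) (g h : Fin n × Fin n → ℝ) :
    rdiff i (WithLp.toLp 2 (a • g + b • h)) v =
      a * rdiff i (WithLp.toLp 2 g) v + b * rdiff i (WithLp.toLp 2 h) v := by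
  unfold rdiff
  split_ifs <;> simp <;> ring

lemma isClosed_admissible : IsClosed (admissible n s) := by
  have : admissible n s = ⋂ i, ⋂ v, {g | rdiff i (WithLp.toLp 2 g) v ≤ s i} := by
    ext g; simp [admissible]
  rw [this]
  exact isClosed_iInter fun i => isClosed_iInter fun v =>
    isClosed_le (rdiff_toLp_continuous i v) continuous_const

lemma convex_admissible : Convex ℝ (admissible n s) := by
  intro g hg h hh a b ha hb hab i v
  rw [rdiff_toLp_comb]
  calc _ ≤ a * s i + b * s i := by gcongr; exacts [hg i v, hh i v]
    _ = s i := by rw [← add_mul, hab, one_mul]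

lemma admissible_add_const {g : Fin n × Fin n → ℝ} (hg : g ∈ admissible n s) (c : ℝ) :
    (fun v => g v + c) ∈ admissible n s := by
  intro i v
  refine le_of_eq_of_le ?_ (hg i v)
  unfold rdiff
  split_ifs <;> simp <;> ring

lemma rdiff_le_of_abs_le {h : Fin n × Fin n → ℝ} {δ : ℝ} (hh : ∀ v, |h v| ≤ δ / 2) (i : Fin 3)
    (v : Fin n × Fin n) : rdiff i (WithLp.toLp 2 h) v ≤ 2 * δ := by
  have h1 := fun v => (abs_le.1 (hh v)).1
  have h2 := fun v => (abs_le.1 (hh v)).2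
  unfold rdiff
  split_ifs
  · linarith [h2 v, h2 (tshift 2 1 v), h1 (tshift 1 0 v), h1 (tshift 1 1 v)]
  · linarith [h2 v, h2 (tshift 1 1 v), h1 (tshift 1 0 v), h1 (tshift 0 1 v)]
  · linarith [h2 v, h2 (tshift 1 2 v), h1 (tshift 0 1 v), h1 (tshift 1 1 v)]

/-- Since every `s i` is at least `2`, shrinking by `1 - δ` makes room for perturbations of size
`δ / 2`. -/
lemma admissible_thick (hs : ∀ i, 2 ≤ s i) {δ : ℝ} (hδ0 : 0 < δ) (hδ1 : δ < 1)
    {g h : Fin n × Fin n → ℝ} (hg : g ∈ admissible n s) (hh : ∀ v, |h v| ≤ δ / 2) :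
    (1 - δ) • g + h ∈ admissible n s := by
  intro i v
  have := rdiff_toLp_comb i v (1 - δ) 1 g h
  rw [one_smul, one_mul] at this
  rw [this]
  have h1 := rdiff_le_of_abs_le hh i v
  have h2 := hg i v
  have h3 := hs i
  nlinarith

lemma box_subset_admissible (hs : ∀ i, 2 ≤ s i) {h : Fin n × Fin n → ℝ}
    (hh : ∀ v, |h v| ≤ 1 / 2) : h ∈ admissible n s := fun i v =>
  (rdiff_le_of_abs_le hh i v).trans (by simpa using hs i)

lemma one_le_volume_slab (hs : ∀ i, 2 ≤ s i) : 1 ≤ volume (slab (admissible n s)) := by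
  have hsub : Set.Icc (fun _ => -(1 / 2 : ℝ)) (fun _ => (1 / 2 : ℝ)) ⊆ slab (admissible n s) := by
    intro g hg
    have hb : ∀ v, |g v| ≤ 1 / 2 := fun v => abs_le.2 ⟨hg.1 v, hg.2 v⟩
    refine ⟨box_subset_admissible hs hb, ?_⟩
    refine (Finset.abs_sum_le_sum_abs _ _).trans
      ((Finset.sum_le_sum (g := fun _ => (1 : ℝ)) fun w _ => (hb w).trans (by norm_num)).trans ?_)
    simp
  refine le_trans ?_ (measure_mono hsub)
  rw [Real.volume_Icc_pi]
  norm_num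

variable [NeZero n]

lemma tshift_eq_add (a b : ℕ) (v : Fin n × Fin n) :
    tshift a b v = v + (Fin.ofNat n a, Fin.ofNat n b) := by
  ext <;> simp [tshift, Fin.val_add, Fin.ofNat]

lemma admissible_translate {g : Fin n × Fin n → ℝ} (hg : g ∈ admissible n s) (w : Fin n × Fin n) :
    (fun v => g (v + w)) ∈ admissible n s := by
  intro i v
  refine le_of_eq_of_le ?_ (hg i (v + w))
  unfold rdiff
  simp only [tshift_eq_add, add_right_comm v _ w]

lemma sub_le_of_step {G : Type*} [AddCommGroup G] {f : G → ℝ} {w : G}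
    (h : ∀ v, f (v + w) - f v ≤ σ) (k : ℕ) (v : G) : f (v + k • w) - f v ≤ k * σ := by
  induction k with
  | zero => simp
  | succ k ih =>
    have := h (v + k • w)
    rw [add_assoc, ← succ_nsmul] at this
    push_cast
    linarith

/-- On a cycle, increments bounded above are also bounded below, because they sum to zero. -/
lemma abs_step_le {G : Type*} [AddCommGroup G] {f : G → ℝ} {w : G} (hσ : 0 ≤ σ) {m : ℕ}
    (hm : 0 < m) (hw : m • w = 0) (h : ∀ v, f (v + w) - f v ≤ σ) (v : G) :
    |f (v + w) - f v| ≤ m * σ := by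
  have hm1 : (1 : ℝ) ≤ m := by exact_mod_cast hm
  refine abs_le.2 ⟨?_, (h v).trans (by nlinarith)⟩
  have h1 := sub_le_of_step h (m - 1) (v + w)
  rw [add_assoc, ← succ_nsmul', Nat.sub_add_cancel hm, hw, add_zero] at h1
  have h2 : ((m - 1 : ℕ) : ℝ) ≤ m := by exact_mod_cast Nat.sub_le _ _
  have := mul_le_mul_of_nonneg_right h2 hσ
  linarith

lemma fin_val_nsmul (k : ℕ) (x : Fin n) : (k • x).val = k * x.val % n := by
  induction k with
  | zero => simp
  | succ k ih => rw [succ_nsmul, Fin.val_add, ih, add_mul, one_mul, Nat.mod_add_mod]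

lemma fin_val_nsmul_one (x : Fin n) : x.val • (1 : Fin n) = x := by
  ext
  rw [fin_val_nsmul, Fin.val_one', Nat.mul_mod_mod, mul_one, Nat.mod_eq_of_lt x.isLt]

lemma osc_le_of_step {f : Fin n × Fin n → ℝ} (hσ : 0 ≤ σ)
    (h1 : ∀ v, |f (v + (1, 0)) - f v| ≤ σ) (h2 : ∀ v, |f (v + (0, 1)) - f v| ≤ σ)
    (v w : Fin n × Fin n) : |f v - f w| ≤ 2 * n * σ := by
  have key : ∀ v w : Fin n × Fin n, f v - f w ≤ 2 * n * σ := by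
    intro v w
    have e : v = w + (v - w).1.val • ((1, 0) : Fin n × Fin n)
        + (v - w).2.val • ((0, 1) : Fin n × Fin n) := by
      ext1 <;> simp [fin_val_nsmul_one]
    have a1 := sub_le_of_step (fun v => (abs_le.1 (h1 v)).2) (v - w).1.val w
    have a2 := sub_le_of_step (fun v => (abs_le.1 (h2 v)).2) (v - w).2.val
      (w + (v - w).1.val • ((1, 0) : Fin n × Fin n))
    rw [← e] at a2
    have b1 : ((v - w).1.val : ℝ) ≤ n := by exact_mod_cast (v - w).1.isLt.le
    have b2 : ((v - w).2.val : ℝ) ≤ n := by exact_mod_cast (v - w).2.isLt.le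
    nlinarith [mul_le_mul_of_nonneg_right b1 hσ, mul_le_mul_of_nonneg_right b2 hσ]
  exact abs_le.2 ⟨by linarith [key w v], key v w⟩

lemma abs_le_of_osc {G : Type*} [Fintype G] [Nonempty G] {f : G → ℝ} {M c : ℝ} (v : G)
    (h : ∀ w, |f v - f w| ≤ M) (hc : |∑ w, f w| ≤ Fintype.card G * c) : |f v| ≤ M + c := by
  have hpos : (0 : ℝ) < Fintype.card G := by exact_mod_cast Fintype.card_pos
  have h1 : Fintype.card G * f v = ∑ w, (f v - f w) + ∑ w, f w := by
    rw [Finset.sum_sub_distrib]; simp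
  have h2 : |∑ w, (f v - f w)| ≤ Fintype.card G * M := by
    refine (Finset.abs_sum_le_sum_abs _ _).trans ((Finset.sum_le_sum fun w _ => h w).trans ?_)
    simp
  have h3 : Fintype.card G * |f v| ≤ Fintype.card G * (M + c) := by
    rw [← abs_of_pos hpos, ← abs_mul, h1, abs_of_pos hpos, mul_add]
    exact (abs_add_le _ _).trans (add_le_add h2 hc)
  exact le_of_mul_le_mul_left h3 hpos

lemma abs_diff_le {g : Fin n × Fin n → ℝ} {w : Fin n × Fin n} {M : ℝ}
    (h : ∀ v v', |(g (v + w) - g v) - (g (v' + w) - g v')| ≤ M) (v : Fin n × Fin n) :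
    |g (v + w) - g v| ≤ M := by
  have := abs_le_of_osc (f := fun v => g (v + w) - g v) (c := 0) v (h v) (by
    rw [Finset.sum_sub_distrib, show ∑ x, g (x + w) = ∑ x, g x from Equiv.sum_comp (Equiv.addRight w) g]; simp)
  simpa using this

/-- Oscillation bound. The second differences are mixed differences in two of the directions
`e₁`, `e₂`, `e₁ + e₂`, so each is bounded in absolute value by going around a cycle; this bounds
the oscillation of the first differences, which have mean zero, and then that of `g`. -/
lemma admissible_osc (hσ : 0 ≤ σ) (hs : ∀ i, s i ≤ σ) {g : Fin n × Fin n → ℝ}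
    (hg : g ∈ admissible n s) (v w : Fin n × Fin n) : |g v - g w| ≤ 8 * n ^ 3 * σ := by
  have hn : 0 < n := Nat.pos_of_neZero n
  have hnw : ∀ w : Fin n × Fin n, n • w = 0 := by
    intro w; ext <;> simp [fin_val_nsmul]
  have hσn : 0 ≤ n * σ := by positivity
  set e₁ : Fin n × Fin n := (1, 0) with he₁
  set e₂ : Fin n × Fin n := (0, 1) with he₂
  have t10 : ∀ v : Fin n × Fin n, tshift 1 0 v = v + e₁ := fun v => by
    rw [tshift_eq_add]; rfl
  have t01 : ∀ v : Fin n × Fin n, tshift 0 1 v = v + e₂ := fun v => by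
    rw [tshift_eq_add]; rfl
  have t11 : ∀ v : Fin n × Fin n, tshift 1 1 v = v + (e₁ + e₂) := fun v => by
    rw [tshift_eq_add, he₁, he₂]; ext1 <;> simp <;> rfl
  have two : Fin.ofNat n 2 = 1 + 1 := by
    ext; simp [Fin.ofNat, Fin.val_add]
  have t21 : ∀ v : Fin n × Fin n, tshift 2 1 v = v + (e₁ + e₂) + e₁ := fun v => by
    rw [tshift_eq_add, two, he₁, he₂]; ext1 <;> simp <;> first | rfl | abel
  have t12 : ∀ v : Fin n × Fin n, tshift 1 2 v = v + (e₁ + e₂) + e₂ := fun v => by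
    rw [tshift_eq_add, two, he₁, he₂]; ext1 <;> simp <;> first | rfl | abel
  have d0 : ∀ v, (g (v + (e₁ + e₂) + e₁) - g (v + (e₁ + e₂))) - (g (v + e₁) - g v) ≤ σ := by
    intro v
    have := (hg 0 v).trans (hs 0)
    simp only [rdiff, t10, t11, t21] at this
    norm_num at this
    linarith
  have d1 : ∀ v, (g (v + e₂ + e₁) - g (v + e₂)) - (g (v + e₁) - g v) ≤ σ := by
    intro v
    have := (hg 1 v).trans (hs 1)
    simp only [rdiff, t10, t11, t01] at this
    norm_num at this
    rw [add_right_comm, add_assoc]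
    linarith
  have d2 : ∀ v, (g (v + (e₁ + e₂) + e₂) - g (v + (e₁ + e₂))) - (g (v + e₂) - g v) ≤ σ := by
    intro v
    have := (hg 2 v).trans (hs 2)
    simp only [rdiff, t01, t11, t12] at this
    norm_num at this
    linarith
  have d1' : ∀ v, (g (v + e₁ + e₂) - g (v + e₁)) - (g (v + e₂) - g v) ≤ σ := by
    intro v
    have := d1 v
    rw [add_right_comm] at this
    linarith
  have a0 := abs_step_le (f := fun v => g (v + e₁) - g v) hσ hn (hnw _) d0
  have a1 := abs_step_le (f := fun v => g (v + e₁) - g v) hσ hn (hnw _) d1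
  have a2 := abs_step_le (f := fun v => g (v + e₂) - g v) hσ hn (hnw _) d2
  have a1' := abs_step_le (f := fun v => g (v + e₂) - g v) hσ hn (hnw _) d1'
  have p1 : ∀ v, |g (v + e₁) - g v| ≤ 4 * n ^ 2 * σ := by
    refine abs_diff_le fun v v' => ?_
    refine (osc_le_of_step (f := fun v => g (v + e₁) - g v) (σ := 2 * (n * σ)) (by positivity)
      (fun u => ?_) (fun u => (a1 u).trans (by linarith)) v v').trans (le_of_eq (by ring))
    have b0 := abs_le.1 (a0 u)
    have b1 := abs_le.1 (a1 (u + e₁))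
    simp only [add_assoc] at b0 b1 ⊢
    rw [abs_le]; constructor <;> linarith [b0.1, b0.2, b1.1, b1.2]
  have p2 : ∀ v, |g (v + e₂) - g v| ≤ 4 * n ^ 2 * σ := by
    refine abs_diff_le fun v v' => ?_
    refine (osc_le_of_step (f := fun v => g (v + e₂) - g v) (σ := 2 * (n * σ)) (by positivity)
      (fun u => (a1' u).trans (by linarith)) (fun u => ?_) v v').trans (le_of_eq (by ring))
    have b0 := abs_le.1 (a2 u)
    have b1 := abs_le.1 (a1' (u + e₂))
    simp only [add_assoc, add_comm e₂ e₁, ← he₂] at b0 b1 ⊢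
    rw [abs_le]; constructor <;> linarith [b0.1, b0.2, b1.1, b1.2]
  exact (osc_le_of_step (by positivity) p1 p2 v w).trans (le_of_eq (by ring))

lemma abs_le_of_mem_slab (hσ : 0 ≤ σ) (hs : ∀ i, s i ≤ σ) {g : Fin n × Fin n → ℝ}
    (hg : g ∈ slab (admissible n s)) (v : Fin n × Fin n) : |g v| ≤ 8 * n ^ 3 * σ + 1 :=
  abs_le_of_osc v (fun w => admissible_osc hσ hs hg.1 v w) (by simpa using hg.2)

end Torus

/-! ### Comparison of two tori -/

section Comparison

/-- The boundary frame: the points of the torus of side `n` outside the core square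
`[2, m) × [2, m)`. -/
def frame (m : ℕ) {n : ℕ} (v : Fin n × Fin n) : Prop :=
  ¬ ((2 ≤ v.1.val ∧ v.1.val < m) ∧ (2 ≤ v.2.val ∧ v.2.val < m))

instance (m n : ℕ) : DecidablePred (frame m (n := n)) := fun v => by
  unfold frame; infer_instance

/-- The core squares of side `m - 2` in the tori of sides `m` and `n` agree. -/
def coreEquiv {m n : ℕ} (h : m ≤ n) :
    {v : Fin m × Fin m // ¬ frame m v} ≃ {v : Fin n × Fin n // ¬ frame m v} where
  toFun v := ⟨(Fin.castLE h v.1.1, Fin.castLE h v.1.2), v.2⟩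
  invFun v := ⟨(⟨v.1.1, (not_not.1 v.2).1.2⟩, ⟨v.1.2, (not_not.1 v.2).2.2⟩), v.2⟩
  left_inv _ := rfl
  right_inv _ := rfl

/-- The extension by zero to `ℕ × ℕ` of a function on the core. -/
noncomputable def coreExt {m n : ℕ} (y : {v : Fin n × Fin n // ¬ frame m v} → ℝ) (h : m ≤ n)
    (i j : ℕ) : ℝ :=
  if hij : (2 ≤ i ∧ i < m) ∧ (2 ≤ j ∧ j < m) then
    y ⟨(⟨i, hij.1.2.trans_le h⟩, ⟨j, hij.2.2.trans_le h⟩), not_not.2 hij⟩ else 0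

lemma glue_zero_eq_coreExt {m n : ℕ} (h : m ≤ n) (y : {v : Fin n × Fin n // ¬ frame m v} → ℝ)
    (v : Fin n × Fin n) : glue (frame m) 0 y v = coreExt y h v.1 v.2 := by
  unfold glue coreExt
  by_cases hv : frame m v
  · rw [dif_pos hv, dif_neg hv]; rfl
  · rw [dif_neg hv, dif_pos (not_not.1 hv)]

lemma glue_zero_comp_eq_coreExt {m n : ℕ} (h : m ≤ n) (y : {v : Fin n × Fin n // ¬ frame m v} → ℝ)
    (v : Fin m × Fin m) :
    glue (frame m) 0 (fun u => y (coreEquiv h u)) v = coreExt y h v.1 v.2 := by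
  unfold glue coreExt
  by_cases hv : frame m v
  · rw [dif_pos hv, dif_neg hv]; rfl
  · rw [dif_neg hv, dif_pos (not_not.1 hv)]; rfl

/-- A shift by at most `2` from a point of `[0, m)` either does not wrap around, or lands outside
`[2, m)` in both `ℤ/mℤ` and `ℤ/nℤ`. -/
lemma mod_eq_or {m n i a : ℕ} (hm : 3 ≤ m) (h : m < n) (hi : i < m) (ha : a ≤ 2) :
    (i + a) % m = (i + a) % n ∨
      (¬ (2 ≤ (i + a) % m ∧ (i + a) % m < m) ∧ ¬ (2 ≤ (i + a) % n ∧ (i + a) % n < m)) := by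
  by_cases h1 : i + a < m
  · left; rw [Nat.mod_eq_of_lt h1, Nat.mod_eq_of_lt (h1.trans h)]
  · right
    have e1 : (i + a) % m = i + a - m := by
      rw [Nat.mod_eq_sub_mod (by omega), Nat.mod_eq_of_lt (by omega)]
    refine ⟨by omega, ?_⟩
    by_cases h2 : i + a < n
    · rw [Nat.mod_eq_of_lt h2]; omega
    · have e2 : (i + a) % n = i + a - n := by
        rw [Nat.mod_eq_sub_mod (by omega), Nat.mod_eq_of_lt (by omega)]
      omega

lemma coreExt_mod {m n : ℕ} (hm : 3 ≤ m) (h : m < n)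
    (y : {v : Fin n × Fin n // ¬ frame m v} → ℝ) {i j a b : ℕ} (hi : i < m) (hj : j < m)
    (ha : a ≤ 2) (hb : b ≤ 2) :
    coreExt y h.le ((i + a) % m) ((j + b) % m) = coreExt y h.le ((i + a) % n) ((j + b) % n) := by
  rcases mod_eq_or hm h hi ha with e1 | ⟨e1, ee⟩
  · rcases mod_eq_or hm h hj hb with e2 | ⟨e2, e2'⟩
    · rw [e1, e2]
    · unfold coreExt
      rw [dif_neg fun q => e2 q.2, dif_neg fun q => e2' q.2]
  · unfold coreExt
    rw [dif_neg fun q => e1 q.1, dif_neg fun q => ee q.1]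

/-- A function on the torus of side `n` that vanishes on the frame is, after restricting to the
core and extending by zero, a function on the torus of side `m` with the same rhombus second
differences: a rhombus has side lengths at most `2`, so one that wraps around meets the zero
values in the same pattern in both tori. -/
lemma volume_fibre_zero_le {m n : ℕ} (hm : 3 ≤ m) (h : m < n) (s : Fin 3 → ℝ) :
    volume (fibre (frame m) (admissible n s) 0) ≤ volume (fibre (frame m) (admissible m s) 0) := by
  have mp : MeasurePreserving (fun (y : {v : Fin n × Fin n // ¬ frame m v} → ℝ)
      (u : {v : Fin m × Fin m // ¬ frame m v}) => y (coreEquiv h.le u)) volume volume :=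
    volume_preserving_arrowCongr' (coreEquiv h.le).symm (MeasurableEquiv.refl ℝ)
      (MeasurePreserving.id _)
  rw [← mp.measure_preimage
    (measurableSet_fibre isClosed_admissible.measurableSet 0).nullMeasurableSet]
  refine measure_mono fun y hy i v => ?_
  have hy' := hy i (Fin.castLE h.le v.1, Fin.castLE h.le v.2)
  refine le_of_eq_of_le ?_ hy'
  have key : ∀ a b : ℕ, a ≤ 2 → b ≤ 2 →
      glue (frame m) 0 (fun u => y (coreEquiv h.le u)) (tshift a b v) =
        glue (frame m) 0 y (tshift a b (Fin.castLE h.le v.1, Fin.castLE h.le v.2)) := by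
    intro a b ha hb
    rw [glue_zero_comp_eq_coreExt, glue_zero_eq_coreExt h.le]
    exact coreExt_mod hm h y v.1.isLt v.2.isLt ha hb
  have key0 : glue (frame m) 0 (fun u => y (coreEquiv h.le u)) v =
        glue (frame m) 0 y (Fin.castLE h.le v.1, Fin.castLE h.le v.2) := by
    rw [glue_zero_comp_eq_coreExt, glue_zero_eq_coreExt h.le]
    rfl
  unfold rdiff
  simp only [key0, key 2 1 (by norm_num) (by norm_num), key 1 2 (by norm_num) (by norm_num),
    key 1 0 (by norm_num) (by norm_num), key 1 1 (by norm_num) (by norm_num),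
    key 0 1 (by norm_num) (by norm_num)]

lemma card_core_ge {m n : ℕ} (h : m ≤ n) :
    (m - 2) ^ 2 ≤ Fintype.card {v : Fin n × Fin n // ¬ frame m v} := by
  let f : Fin (m - 2) × Fin (m - 2) → {v : Fin n × Fin n // ¬ frame m v} := fun q =>
    ⟨(⟨q.1 + 2, by omega⟩, ⟨q.2 + 2, by omega⟩), not_not.2 (by
      have := q.1.isLt; have := q.2.isLt
      refine ⟨⟨?_, ?_⟩, ?_, ?_⟩ <;> simp only [] <;> omega)⟩
  have hf : Function.Injective f := by
    rintro ⟨a, b⟩ ⟨c, d⟩ hq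
    have h1 := congrArg (fun q => q.1.1.val) hq
    have h2 := congrArg (fun q => q.1.2.val) hq
    simp only [f] at h1 h2
    ext <;> simp only <;> omega
  have := Fintype.card_le_of_injective f hf
  simpa [sq] using this

lemma card_frame_add {m n : ℕ} :
    Fintype.card {v : Fin n × Fin n // frame m v} +
      Fintype.card {v : Fin n × Fin n // ¬ frame m v} = n ^ 2 := by
  have := Fintype.card_congr (Equiv.sumCompl (frame m (n := n)))
  rw [Fintype.card_sum] at this
  rw [this]; simp [sq]

/-- The chain of estimates `slab n ≤ n² (2R)^{#frame} F`, `F ≤ F'` and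
`δ^{#frame} (1 - δ)^{#core} F' ≤ (2M + 1) slab m` with `δ = 1 / m`, where `F` and `F'` are the
volumes of the fibres over zero. Both frames have `O((n - m) n)` points and `R`, `M` are
polynomial in `n`. -/
lemma volume_slab_compare {s : Fin 3 → ℝ} {σ : ℝ} (hs : ∀ i, 2 ≤ s i) (hσ : ∀ i, s i ≤ σ)
    {m n : ℕ} (hm : 16 * σ + 10 ≤ m) (h : m < n) :
    volume (slab (admissible n s)) ≤
      (n : ℝ≥0∞) ^ (35 * ((n - m) * n)) * volume (slab (admissible m s)) := by
  have hσ2 : 2 ≤ σ := (hs 0).trans (hσ 0)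
  have hm42 : 42 ≤ m := by
    have : (42 : ℝ) ≤ m := by linarith
    exact_mod_cast this
  have hnm : (m : ℝ) < n := by exact_mod_cast h
  have hn1 : (1 : ℝ) ≤ n := by linarith
  have hn1' : 1 ≤ n := by omega
  have hn1e : (1 : ℝ≥0∞) ≤ n := by exact_mod_cast hn1'
  have hm0 : (0 : ℝ) < m := by linarith
  have : NeZero m := ⟨by omega⟩
  have : NeZero n := ⟨by omega⟩
  obtain ⟨k, hn⟩ : ∃ k, n = m + k := ⟨n - m, by omega⟩
  have hk1 : 1 ≤ k := by omega
  rw [show n - m = k by omega]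
  have hb₃ : Fintype.card {v : Fin n × Fin n // frame m v} ≤ 6 * (k * n) := by
    have h1 := card_frame_add (m := m) (n := n)
    have h2 := card_core_ge h.le
    obtain ⟨r, rfl⟩ : ∃ r, m = r + 2 := ⟨m - 2, by omega⟩
    rw [Nat.add_sub_cancel] at h2
    nlinarith
  have hb₂ : Fintype.card {v : Fin m × Fin m // frame m v} ≤ 4 * n := by
    have h1 := card_frame_add (m := m) (n := m)
    have h2 := card_core_ge (le_refl m)
    obtain ⟨r, rfl⟩ : ∃ r, m = r + 2 := ⟨m - 2, by omega⟩
    rw [Nat.add_sub_cancel] at h2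
    nlinarith
  have hc₂ : Fintype.card {v : Fin m × Fin m // ¬ frame m v} ≤ m ^ 2 := by
    have h1 := card_frame_add (m := m) (n := m)
    omega
  have e₃ := volume_slab_le (p := frame m (n := n)) (S := admissible n s)
    isClosed_admissible.measurableSet convex_admissible (fun g hg c => admissible_add_const hg c)
    (fun g hg w => admissible_translate hg w) (R := 8 * n ^ 3 * σ + 1) (by positivity)
    (fun g hg v => abs_le_of_mem_slab (by linarith) hσ hg v)
  have hδ0 : (0 : ℝ) < 1 / m := by positivity
  have hδ1 : 1 / (m : ℝ) < 1 := by
    rw [div_lt_one hm0]; linarith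
  have e₂ := volume_fibre_le (p := frame m (n := m)) (S := admissible m s)
    (fun g hg c => admissible_add_const hg c) hδ0 hδ1
    (fun g hg h hh => admissible_thick hs hδ0 hδ1 hg hh) (v₀ := (0, 0)) (by simp [frame])
    (M := ⌈8 * (m : ℝ) ^ 3 * σ + 1⌉₊) (fun g hg v =>
      (by linarith [admissible_osc (by linarith) hσ hg v (0, 0)] :
        |g v - g (0, 0)| + 1 ≤ 8 * (m : ℝ) ^ 3 * σ + 1).trans (Nat.le_ceil _))
  have e₁ := volume_fibre_zero_le (m := m) (by omega) h s
  have hR : ENNReal.ofReal (2 * (8 * n ^ 3 * σ + 1)) ≤ (n : ℝ≥0∞) ^ 4 := by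
    rw [← ENNReal.ofReal_natCast n, ← ENNReal.ofReal_pow (by positivity)]
    refine ENNReal.ofReal_le_ofReal ?_
    have h3 : (1 : ℝ) ≤ n ^ 3 := one_le_pow₀ hn1
    have : (n : ℝ) ^ 3 * (16 * σ + 2) ≤ n ^ 3 * n := by gcongr; linarith
    nlinarith
  have hM : (2 * (⌈8 * (m : ℝ) ^ 3 * σ + 1⌉₊ : ℝ≥0∞) + 1) ≤ (n : ℝ≥0∞) ^ 4 := by
    have : (2 * (⌈8 * (m : ℝ) ^ 3 * σ + 1⌉₊ : ℝ) + 1) ≤ (n : ℝ) ^ 4 := by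
      have h1 := (Nat.ceil_lt_add_one (by positivity : 0 ≤ 8 * (m : ℝ) ^ 3 * σ + 1)).le
      have h3 : (1 : ℝ) ≤ n ^ 3 := one_le_pow₀ hn1
      have h4 : (n : ℝ) ^ 3 * (16 * σ + 5) ≤ n ^ 3 * n := by gcongr; linarith
      have h5 : (m : ℝ) ^ 3 * σ ≤ n ^ 3 * σ := by gcongr
      nlinarith
    exact_mod_cast this
  have hδb : 1 ≤ (n : ℝ≥0∞) ^ (4 * n) *
      ENNReal.ofReal (1 / m) ^ Fintype.card {v : Fin m × Fin m // frame m v} := by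
    rw [← ENNReal.ofReal_natCast n, ← ENNReal.ofReal_pow (by positivity),
      ← ENNReal.ofReal_pow (by positivity), ← ENNReal.ofReal_mul (by positivity)]
    rw [ENNReal.one_le_ofReal, one_div, inv_pow, ← div_eq_mul_inv, le_div_iff₀ (by positivity),
      one_mul]
    calc (m : ℝ) ^ _ ≤ (n : ℝ) ^ Fintype.card {v : Fin m × Fin m // frame m v} := by gcongr
      _ ≤ _ := pow_le_pow_right₀ hn1 hb₂
  have hδc : 1 ≤ (n : ℝ≥0∞) ^ n *
      ENNReal.ofReal (1 - 1 / m) ^ Fintype.card {v : Fin m × Fin m // ¬ frame m v} := by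
    have h1 : Real.exp (-(2 / m)) ≤ 1 - 1 / m := by
      rw [Real.exp_neg, inv_le_comm₀ (Real.exp_pos _) (by linarith)]
      refine le_trans ?_ (Real.add_one_le_exp _)
      rw [inv_le_iff_one_le_mul₀ (by linarith)]
      have : (1 : ℝ) / m ≤ 1 / 2 := by gcongr; linarith
      have e : (2 : ℝ) / m = 2 * (1 / m) := by ring
      rw [e]
      nlinarith
    have h2 : Real.exp (-(2 / m)) ^ m ^ 2 = Real.exp (-2) ^ m := by
      rw [← Real.exp_nat_mul, ← Real.exp_nat_mul]
      congr 1; push_cast; field_simp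
    have h3 : 1 / (n : ℝ) ≤ Real.exp (-2) := by
      rw [Real.exp_neg, one_div]
      refine inv_anti₀ (Real.exp_pos _) ?_
      have : Real.exp 2 = Real.exp 1 * Real.exp 1 := by rw [← Real.exp_add]; norm_num
      have := Real.exp_one_lt_d9
      nlinarith [Real.exp_pos 1]
    have h4 : (1 / (n : ℝ)) ^ n ≤
        (1 - 1 / m) ^ Fintype.card {v : Fin m × Fin m // ¬ frame m v} := by
      calc (1 / (n : ℝ)) ^ n ≤ (1 / (n : ℝ)) ^ m :=
            pow_le_pow_of_le_one (by positivity) (by rw [div_le_one (by linarith)]; exact hn1) h.le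
        _ ≤ Real.exp (-2) ^ m := by gcongr
        _ = Real.exp (-(2 / m)) ^ m ^ 2 := h2.symm
        _ ≤ (1 - 1 / m) ^ m ^ 2 := by gcongr
        _ ≤ _ := pow_le_pow_of_le_one (by linarith) (by linarith) hc₂
    rw [← ENNReal.ofReal_natCast n, ← ENNReal.ofReal_pow (by positivity),
      ← ENNReal.ofReal_pow (by linarith), ← ENNReal.ofReal_mul (by positivity),
      ENNReal.one_le_ofReal]
    calc (1 : ℝ) = n ^ n * (1 / (n : ℝ)) ^ n := by
          rw [← mul_pow, mul_one_div_cancel (by positivity), one_pow]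
      _ ≤ _ := by gcongr
  set F₂ := volume (fibre (frame m (n := m)) (admissible m s) 0) with hF₂
  set b₂ := Fintype.card {v : Fin m × Fin m // frame m v}
  set c₂ := Fintype.card {v : Fin m × Fin m // ¬ frame m v}
  set A₂ := volume (slab (admissible m s)) with hA₂
  have hF : F₂ ≤ (n : ℝ≥0∞) ^ (5 * n + 4) * A₂ := by
    calc F₂ = 1 * (1 * F₂) := by simp
      _ ≤ ((n : ℝ≥0∞) ^ (4 * n) * ENNReal.ofReal (1 / m) ^ b₂) *
          (((n : ℝ≥0∞) ^ n * ENNReal.ofReal (1 - 1 / m) ^ c₂) * F₂) := by gcongr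
      _ = (n : ℝ≥0∞) ^ (5 * n) * (ENNReal.ofReal (1 / m) ^ b₂ *
          (ENNReal.ofReal (1 - 1 / m) ^ c₂ * F₂)) := by
          rw [show 5 * n = 4 * n + n by ring, pow_add]; ring
      _ ≤ (n : ℝ≥0∞) ^ (5 * n) * ((n : ℝ≥0∞) ^ 4 * A₂) := by
          exact mul_le_mul_right (e₂.trans (by gcongr)) _
      _ = _ := by rw [pow_add]; ring
  calc volume (slab (admissible n s)) ≤ _ := e₃
    _ ≤ (n : ℝ≥0∞) ^ 2 * ((n : ℝ≥0∞) ^ 4) ^ (6 * (k * n)) *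
        ((n : ℝ≥0∞) ^ (5 * n + 4) * A₂) := by
        refine mul_le_mul' (mul_le_mul' (le_of_eq ?_) ?_) (e₁.trans hF)
        · simp [sq]
        · calc _ ≤ ((n : ℝ≥0∞) ^ 4) ^ Fintype.card {v : Fin n × Fin n // frame m v} := by gcongr
            _ ≤ _ := pow_le_pow_right₀ (one_le_pow₀ hn1e) hb₃
    _ = (n : ℝ≥0∞) ^ (6 + 24 * (k * n) + 5 * n) * A₂ := by
        rw [← pow_mul, ← mul_assoc, ← pow_add, ← pow_add]; congr 2; ring
    _ ≤ _ := by
        have : n ≤ k * n := Nat.le_mul_of_pos_left _ hk1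
        gcongr
        omega

end Comparison

/-! ### The slab as a cylinder over the polytope -/

section HausdorffLink

/-- The constant function `1 / n`, a unit vector of `ℝ^(n²)`. -/
noncomputable def constUnit (n : ℕ) : EuclideanSpace ℝ (Fin n × Fin n) :=
  WithLp.toLp 2 fun _ => (1 / n : ℝ)

lemma norm_constUnit {n : ℕ} (hn : 0 < n) : ‖constUnit n‖ = 1 := by
  have hn' : (n : ℝ) ≠ 0 := by positivity
  rw [EuclideanSpace.norm_eq, Real.sqrt_eq_one]
  simp [constUnit]
  field_simp

lemma inner_constUnit (n : ℕ) (g : EuclideanSpace ℝ (Fin n × Fin n)) :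
    inner ℝ (constUnit n) g = (1 / n) * ∑ v, g v := by
  rw [PiLp.inner_apply, Finset.mul_sum]
  simp [constUnit, mul_comm]

/-- The linear isometry `(w, t) ↦ w + t u`, where `u` is the constant unit vector and `w` ranges
over its orthogonal complement, the hyperplane of functions summing to zero. -/
noncomputable def hyperplaneSplit (n : ℕ) (hn : 0 < n) :
    WithLp 2 ((Submodule.span ℝ {constUnit n})ᗮ × ℝ) →ₗᵢ[ℝ] EuclideanSpace ℝ (Fin n × Fin n) where
  toFun q := (q.fst : EuclideanSpace ℝ (Fin n × Fin n)) + q.snd • constUnit n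
  map_add' q q' := by simp [add_smul]; abel
  map_smul' c q := by simp [mul_smul]
  norm_map' q := by
    have h0 : inner ℝ (q.fst : EuclideanSpace ℝ (Fin n × Fin n)) (q.snd • constUnit n) = 0 := by
      rw [real_inner_smul_right, (Submodule.mem_orthogonal_singleton_iff_inner_left).1 q.fst.2,
        mul_zero]
    have h1 := norm_add_sq_eq_norm_sq_add_norm_sq_of_inner_eq_zero _ _ h0
    rw [← sq_eq_sq₀ (norm_nonneg _) (norm_nonneg _), WithLp.prod_norm_sq_eq_of_L2]
    simp only [LinearMap.coe_mk, AddHom.coe_mk]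
    rw [sq, h1, norm_smul, norm_constUnit hn]
    simp [sq]

lemma finrank_hyperplane {n : ℕ} (hn : 0 < n) :
    Module.finrank ℝ (Submodule.span ℝ {constUnit n})ᗮ = n ^ 2 - 1 := by
  have h := (Submodule.span ℝ {constUnit n}).finrank_add_finrank_orthogonal
  rw [finrank_span_singleton (by rw [← norm_ne_zero_iff, norm_constUnit hn]; simp)] at h
  have h2 : Module.finrank ℝ (EuclideanSpace ℝ (Fin n × Fin n)) = n ^ 2 := by simp [sq]
  omega

/-- The slab is the cylinder over `torusPoly n s` of height `2 n` in the direction of the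
constant functions. -/
lemma volume_slab_eq {n : ℕ} (hn : 0 < n) (s : Fin 3 → ℝ) :
    volume (slab (admissible n s)) =
      hratio (n ^ 2 - 1) * μH[((n : ℝ) ^ 2 - 1)] (torusPoly n s) * (2 * n : ℕ) := by
  have hn' : (0 : ℝ) < n := by positivity
  set W := (Submodule.span ℝ {constUnit n})ᗮ with hW
  have hfin : Module.finrank ℝ (WithLp 2 (W × ℝ)) =
      Module.finrank ℝ (EuclideanSpace ℝ (Fin n × Fin n)) := by
    rw [LinearEquiv.finrank_eq (WithLp.linearEquiv 2 ℝ _), Module.finrank_prod,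
      finrank_hyperplane hn]
    have : 1 ≤ n ^ 2 := Nat.one_le_pow _ _ hn
    simp
    rw [← sq]; omega
  let Ψ := (hyperplaneSplit n hn).toLinearIsometryEquiv hfin
  set P' : Set W := {w | ∀ i v, rdiff i (w : EuclideanSpace ℝ (Fin n × Fin n)) v ≤ s i} with hP'
  have hsumW : ∀ w : W, ∑ v, (w : EuclideanSpace ℝ (Fin n × Fin n)) v = 0 := by
    intro w
    have := Submodule.mem_orthogonal_singleton_iff_inner_right.1 w.2
    rw [inner_constUnit] at this
    have h1 : (1 / (n : ℝ)) ≠ 0 := by positivity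
    exact (mul_eq_zero.1 this).resolve_left h1
  have hΨ : ∀ q v, Ψ q v = (q.fst : EuclideanSpace ℝ (Fin n × Fin n)) v + q.snd * (1 / n) :=
    fun q v => rfl
  have hpre : Ψ ⁻¹' (WithLp.ofLp ⁻¹' slab (admissible n s)) =
      cyl P' (Set.Icc (-(n : ℝ)) n) := by
    ext q
    have h1 : (∀ i v, rdiff i (WithLp.toLp 2 (WithLp.ofLp (Ψ q))) v ≤ s i) ↔ q.fst ∈ P' := by
      refine forall_congr' fun i => forall_congr' fun v => ?_
      have : rdiff i (WithLp.toLp 2 (WithLp.ofLp (Ψ q))) v =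
          rdiff i (q.fst : EuclideanSpace ℝ (Fin n × Fin n)) v := by
        unfold rdiff
        simp only [hΨ]
        split_ifs <;> ring
      rw [this]
    have h2 : |∑ v, Ψ q v| ≤ Fintype.card (Fin n × Fin n) ↔ q.snd ∈ Set.Icc (-(n : ℝ)) n := by
      simp only [hΨ]
      rw [Finset.sum_add_distrib, hsumW, zero_add, Set.mem_Icc, ← abs_le]
      have : (∑ _ : Fin n × Fin n, q.snd * (1 / (n : ℝ))) = n * q.snd := by
        simp; field_simp
      rw [this, abs_mul, abs_of_pos hn']
      simp [hn']
    exact and_congr h1 h2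
  have hclosed : IsClosed P' := by
    have : P' = (fun w : W => WithLp.ofLp (w : EuclideanSpace ℝ (Fin n × Fin n))) ⁻¹'
        admissible n s := rfl
    rw [this]
    exact isClosed_admissible.preimage (by fun_prop)
  have himage : torusPoly n s = Subtype.val '' P' := by
    ext g
    constructor
    · rintro ⟨h0, h1⟩
      refine ⟨⟨g, ?_⟩, h1, rfl⟩
      rw [hW, Submodule.mem_orthogonal_singleton_iff_inner_right, inner_constUnit, h0, mul_zero]
    · rintro ⟨w, hw, rfl⟩
      exact ⟨hsumW w, hw⟩
  have hcast : ((n : ℝ) ^ 2 - 1) = ((n ^ 2 - 1 : ℕ) : ℝ) := by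
    rw [Nat.cast_sub (Nat.one_le_pow _ _ hn)]; simp
  have hms : MeasurableSet (slab (admissible n s)) :=
    measurableSet_slab isClosed_admissible.measurableSet
  rw [himage, isometry_subtype_coe.hausdorffMeasure_image (Or.inl (by rw [hcast]; positivity)),
    hcast, ← volume_eq_hratio_mul (finrank_hyperplane hn),
    ← (PiLp.volume_preserving_ofLp (Fin n × Fin n)).measure_preimage hms.nullMeasurableSet,
    ← Ψ.measurePreserving.measure_preimage
      ((PiLp.volume_preserving_ofLp (Fin n × Fin n)).measurable hms).nullMeasurableSet, hpre]
  have e : cyl P' (Set.Icc (-(n : ℝ)) n) = WithLp.ofLp ⁻¹' (P' ×ˢ Set.Icc (-(n : ℝ)) n) := rfl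
  rw [e, (WithLp.volume_preserving_ofLp _ _).measure_preimage
    (hclosed.measurableSet.prod measurableSet_Icc).nullMeasurableSet, Measure.volume_eq_prod,
    Measure.prod_prod, Real.volume_Icc]
  congr 1
  rw [← ENNReal.ofReal_natCast]
  congr 1
  push_cast; ring

lemma hratio_le_pow {a : ℕ} (ha : 0 < a) {N : ℕ} (hN : 6 ≤ N) (j : ℕ) (h : a + j ≤ N ^ 2) :
    hratio a ≤ (N : ℝ≥0) ^ (3 * j) * hratio (a + j) := by
  induction j with
  | zero => simp
  | succ j ih =>
    have h1 := ih (by omega)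
    have h2 := hratio_le_succ (d := a + j) (by omega)
    have h3 : ((6 * (a + j + 1) : ℕ) : ℝ≥0) ≤ (N : ℝ≥0) ^ 3 := by
      have : 6 * (a + j + 1) ≤ N ^ 3 := by
        rw [pow_succ, mul_comm]; exact Nat.mul_le_mul (by omega) hN
      exact_mod_cast this
    calc hratio a ≤ (N : ℝ≥0) ^ (3 * j) * hratio (a + j) := h1
      _ ≤ (N : ℝ≥0) ^ (3 * j) * ((N : ℝ≥0) ^ 3 * hratio (a + j + 1)) := by
          gcongr; exact h2.trans (by gcongr)
      _ = _ := by rw [mul_add, pow_add, mul_assoc]; rfl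

lemma hratio_compare {m n : ℕ} (hm : 6 ≤ m) (h : m < n) :
    hratio (m ^ 2 - 1) ≤ (n : ℝ≥0) ^ (6 * ((n - m) * n)) * hratio (n ^ 2 - 1) := by
  obtain ⟨k, rfl⟩ : ∃ k, n = m + k := ⟨n - m, by omega⟩
  have hm2 : 36 ≤ m ^ 2 := by nlinarith
  have hle : m ^ 2 ≤ (m + k) ^ 2 := Nat.pow_le_pow_left (Nat.le_add_right m k) 2
  have h1 := hratio_le_pow (a := m ^ 2 - 1) (by omega) (N := m + k) (by omega)
    ((m + k) ^ 2 - m ^ 2) (by omega)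
  rw [show m ^ 2 - 1 + ((m + k) ^ 2 - m ^ 2) = (m + k) ^ 2 - 1 by omega] at h1
  refine h1.trans ?_
  have hn1 : (1 : ℝ≥0) ≤ ((m + k : ℕ) : ℝ≥0) := by exact_mod_cast (by omega : 1 ≤ m + k)
  refine mul_le_mul_left (pow_le_pow_right₀ hn1 ?_) _
  rw [Nat.add_sub_cancel_left]
  have : (m + k) ^ 2 - m ^ 2 ≤ 2 * (k * (m + k)) := by
    rw [Nat.sub_le_iff_le_add]; nlinarith
  omega

end HausdorffLink

/-! ### Comparison of the polytope volumes -/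

section Conclusion

variable {s : Fin 3 → ℝ} {σ : ℝ}

lemma volume_slab_ne_top (hs : ∀ i, 2 ≤ s i) (hσ : ∀ i, s i ≤ σ) {n : ℕ} (hn : 0 < n) :
    volume (slab (admissible n s)) ≠ ∞ := by
  have : NeZero n := ⟨hn.ne'⟩
  have hσ0 : 0 ≤ σ := by linarith [hs 0, hσ 0]
  refine ne_top_of_le_ne_top ?_ (measure_mono (t := Set.Icc (fun _ => -(8 * (n : ℝ) ^ 3 * σ + 1))
    (fun _ => 8 * (n : ℝ) ^ 3 * σ + 1)) fun g hg => ?_)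
  · exact isCompact_Icc.measure_lt_top.ne
  · have := fun v => abs_le.1 (abs_le_of_mem_slab hσ0 hσ hg v)
    exact ⟨fun v => (this v).1, fun v => (this v).2⟩

lemma volume_slab_toReal {n : ℕ} (hn : 0 < n) (s : Fin 3 → ℝ) :
    (volume (slab (admissible n s))).toReal = hratio (n ^ 2 - 1) * tvol n s * (2 * n) := by
  rw [volume_slab_eq hn, ENNReal.toReal_mul, ENNReal.toReal_mul, tvol]
  simp

/-- The slab contains the unit cube `[-1/2, 1/2]^(n²)`. -/
lemma tvol_lower (hs : ∀ i, 2 ≤ s i) (hσ : ∀ i, s i ≤ σ) {n : ℕ} (hn : 0 < n) :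
    1 ≤ tvol n s * (2 * n) := by
  have h1 : 1 ≤ (volume (slab (admissible n s))).toReal := by
    have := ENNReal.toReal_mono (volume_slab_ne_top hs hσ hn) (one_le_volume_slab hs)
    simpa using this
  rw [volume_slab_toReal hn] at h1
  have h2 : (hratio (n ^ 2 - 1) : ℝ) ≤ 1 := by exact_mod_cast hratio_le_one _
  have h3 : 0 ≤ tvol n s := ENNReal.toReal_nonneg
  calc (1 : ℝ) ≤ _ := h1
    _ ≤ 1 * tvol n s * (2 * n) := by gcongr
    _ = _ := by ring

lemma tvol_compare (hs : ∀ i, 2 ≤ s i) (hσ : ∀ i, s i ≤ σ) {m n : ℕ} (hm : 16 * σ + 10 ≤ m)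
    (h : m < n) : tvol n s ≤ (n : ℝ) ^ (41 * ((n - m) * n)) * tvol m s := by
  have hσ2 : 2 ≤ σ := (hs 0).trans (hσ 0)
  have hm42 : 42 ≤ m := by
    have : (42 : ℝ) ≤ m := by linarith
    exact_mod_cast this
  have hn0 : (0 : ℝ) < n := by
    have : 0 < n := by omega
    exact_mod_cast this
  have hmn : (m : ℝ) ≤ n := by exact_mod_cast h.le
  have h1 := ENNReal.toReal_mono (ENNReal.mul_ne_top (by finiteness)
    (volume_slab_ne_top hs hσ (by omega))) (volume_slab_compare hs hσ hm h)
  rw [ENNReal.toReal_mul, volume_slab_toReal (by omega), volume_slab_toReal (by omega),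
    ENNReal.toReal_pow, ENNReal.toReal_natCast] at h1
  have h2 : (hratio (m ^ 2 - 1) : ℝ) ≤ (n : ℝ) ^ (6 * ((n - m) * n)) * hratio (n ^ 2 - 1) := by
    exact_mod_cast hratio_compare (by omega) h
  have hr : (0 : ℝ) < hratio (n ^ 2 - 1) := by
    exact_mod_cast pos_iff_ne_zero.2 (hratio_ne_zero _)
  have ht : 0 ≤ tvol m s := ENNReal.toReal_nonneg
  refine le_of_mul_le_mul_left ?_ (mul_pos hr (by positivity : (0 : ℝ) < 2 * n))
  calc hratio (n ^ 2 - 1) * (2 * n) * tvol n s = hratio (n ^ 2 - 1) * tvol n s * (2 * n) := by ring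
    _ ≤ _ := h1
    _ ≤ (n : ℝ) ^ (35 * ((n - m) * n)) *
        ((n : ℝ) ^ (6 * ((n - m) * n)) * hratio (n ^ 2 - 1) * tvol m s * (2 * n)) := by gcongr
    _ = _ := by
        rw [show 41 * ((n - m) * n) = 35 * ((n - m) * n) + 6 * ((n - m) * n) by ring, pow_add]
        ring

/-- Passing to roots. Taking logarithms, the comparison costs `41 k L / n` with `k = n - m` and
`L = log n`. Replacing the exponent `1 / n²` by `1 / m²` costs at most `4 k L / n`, because
`log Y ≥ -2 L`. Finally `1 - x ≤ exp (-x)`. -/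
lemma root_compare {X Y : ℝ} {m n : ℕ} (hm : 2 ≤ m) (h : m < n) (hX : 0 < X)
    (hY : 1 ≤ Y * (2 * m)) (hXY : X ≤ (n : ℝ) ^ (41 * ((n - m) * n)) * Y) {C : ℝ} (hC : 50 ≤ C) :
    X ^ ((1 : ℝ) / (n : ℝ) ^ 2) * (1 - C * ((n : ℝ) - (m : ℝ)) * Real.log n / n) ≤
      Y ^ ((1 : ℝ) / (m : ℝ) ^ 2) := by
  have hm0 : (2 : ℝ) ≤ m := by exact_mod_cast hm
  have hk : (m : ℝ) + 1 ≤ n := by exact_mod_cast h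
  set k : ℝ := (n : ℝ) - m with hkdef
  have hn0 : (0 : ℝ) < n := by linarith
  have hY0 : 0 < Y := by
    by_contra hneg
    nlinarith
  set L := Real.log n with hL
  have hL0 : 0 < L := Real.log_pos (by linarith)
  have hlogX : Real.log X ≤ 41 * (k * n) * L + Real.log Y := by
    have := Real.log_le_log hX hXY
    rw [Real.log_mul (by positivity) hY0.ne', Real.log_pow] at this
    push_cast [Nat.cast_sub h.le] at this
    exact this
  have hlogY : -(2 * L) ≤ Real.log Y := by
    have h1 := Real.log_nonneg hY
    rw [Real.log_mul hY0.ne' (by positivity)] at h1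
    have h2 : Real.log (2 * m) ≤ 2 * L := by
      rw [hL, ← Real.log_rpow hn0]
      refine Real.log_le_log (by positivity) ?_
      norm_num
      nlinarith
    linarith
  have hu : 1 - C * k * L / n ≤ Real.exp (-(50 * (k * L / n))) := by
    have h1 := Real.add_one_le_exp (-(50 * (k * L / n)))
    have h2 : 0 ≤ k * L / n := by
      have : 0 ≤ k := by linarith
      positivity
    have h3 : C * k * L / n = C * (k * L / n) := by ring
    rw [h3]
    nlinarith
  rw [Real.rpow_def_of_pos hX, Real.rpow_def_of_pos hY0]
  refine (mul_le_mul_of_nonneg_left hu (Real.exp_pos _).le).trans ?_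
  rw [← Real.exp_add, Real.exp_le_exp]
  have e1 : Real.log X * (1 / (n : ℝ) ^ 2) ≤ (41 * (k * n) * L + Real.log Y) * (1 / (n : ℝ) ^ 2) := by
    gcongr
  have e2 : (41 * (k * n) * L + Real.log Y) * (1 / (n : ℝ) ^ 2) =
      41 * (k * L / n) + Real.log Y * (1 / (n : ℝ) ^ 2) := by
    field_simp
  have e3 : 1 / (m : ℝ) ^ 2 - 1 / (n : ℝ) ^ 2 ≤ 2 * (k / n) := by
    have : 1 / (m : ℝ) ^ 2 - 1 / (n : ℝ) ^ 2 = (k / n) * ((m + n) / (m ^ 2 * n)) := by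
      rw [hkdef]; field_simp; ring
    rw [this, mul_comm 2]
    refine mul_le_mul_of_nonneg_left ?_ (div_nonneg (by linarith) hn0.le)
    rw [div_le_iff₀ (by positivity)]
    have : (n : ℝ) * 1 ≤ n * m ^ 2 := by gcongr; nlinarith
    nlinarith
  have e4 : 0 ≤ 1 / (m : ℝ) ^ 2 - 1 / (n : ℝ) ^ 2 := by
    rw [sub_nonneg]; gcongr
  have e5 : -(4 * (k * L / n)) ≤ Real.log Y * (1 / (m : ℝ) ^ 2 - 1 / (n : ℝ) ^ 2) := by
    have h1 := mul_le_mul_of_nonneg_right hlogY e4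
    have h2 := mul_le_mul_of_nonneg_left e3 (by positivity : 0 ≤ 2 * L)
    have h3 : 2 * L * (2 * (k / n)) = 4 * (k * L / n) := by ring
    linarith
  have e6 : 0 ≤ k * L / n := by
    have : 0 ≤ k := by linarith
    positivity
  rw [mul_sub] at e5
  linarith

end Conclusion

end Proof

/-- With `2 = s₀ ≤ s₁ ≤ s₂`, there is a constant `C > 0` such that for all integers
`C < n₂ < n₃`, `|P_{n₂}(s)|^{1/n₂²} ≥ |P_{n₃}(s)|^{1/n₃²} (1 − C (n₃ − n₂)(ln n₃)/n₃)`. -/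
theorem stmt_3 (s : Fin 3 → ℝ) (hs0 : s 0 = 2) (hs01 : s 0 ≤ s 1) (hs12 : s 1 ≤ s 2) :
    ∃ C : ℝ, 0 < C ∧ ∀ n₂ n₃ : ℕ, C < (n₂ : ℝ) → n₂ < n₃ →
      tvol n₃ s ^ ((1 : ℝ) / (n₃ : ℝ) ^ 2) *
          (1 - C * ((n₃ : ℝ) - (n₂ : ℝ)) * Real.log n₃ / n₃) ≤
        tvol n₂ s ^ ((1 : ℝ) / (n₂ : ℝ) ^ 2) := by
  have hs : ∀ i, 2 ≤ s i := by
    intro i; fin_cases i <;> simp <;> linarith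
  have hσ : ∀ i, s i ≤ s 2 := by
    intro i; fin_cases i <;> simp <;> linarith
  refine ⟨16 * s 2 + 50, by linarith [hs 2], fun m n hm h => ?_⟩
  have hm1 : (50 : ℝ) < m := by linarith [hs 2]
  have hm2 : 50 < m := by exact_mod_cast hm1
  have hX : 0 < tvol n s := by
    have h1 := tvol_lower hs hσ (by omega : 0 < n)
    have h2 : 0 ≤ tvol n s := ENNReal.toReal_nonneg
    refine h2.lt_of_ne fun h3 => ?_
    rw [← h3] at h1; norm_num at h1
  exact root_compare (by omega) h hX (tvol_lower hs hσ (by omega))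
    (tvol_compare hs hσ (by linarith) h) (by linarith [hs 2])
end
end

section
/- Fix a positive integer n₁ and s = (s₀, s₁, s₂) ∈ ℝ³ with s₀, s₁, s₂ > 0. Let t assign to each pair (v, i) ∈ 𝕋_{n₁} × {0,1,2} a nonnegative real t_i(v), and let Q_{n₁}(t) be the polytope of all g : 𝕋_{n₁} → ℝ with Σ_{v∈𝕋_{n₁}} g(v) = 0 and Δᵢg(v) ≤ t_i(v) for every v and every i ∈ {0,1,2}. Suppose that for each i ∈ {0,1,2} one has Σ_{v∈𝕋_{n₁}} t_i(v) = n₁² · s_i. Then |Q_{n₁}(t)| ≤ |P_{n₁}(s)|, where both volumes are (n₁²−1)-dimensional Lebesgue measures inside the hyperplane {g : Σ_{v∈𝕋_{n₁}} g(v) = 0}. -/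
/-!
Translating the bounds `t` by a torus element `w` gives a polytope isometric to `Q_n(t)`
(`qPoly_shift`), and the constant bounds `s` are the average of these `n²` translates of `t`.
Since `a • Q_n(t) + b • Q_n(u) ⊆ Q_n(a • t + b • u)`, the Brunn–Minkowski inequality shows that
`{t | c ≤ |Q_n(t)|}` is convex for every `c` (`convex_superlevel`). Taking `c = |Q_n(t)|`, this
set contains all translates of `t`, hence their average `s`.

The Brunn–Minkowski inequality is used in its multiplicative form `μ A ^ a * μ B ^ b ≤ μ C`
(`bm_haar`) for measurable sets with `a • A + b • B ⊆ C` and `a + b = 1`. It is deduced from the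
Prékopa–Leindler inequality on `ℝ^d` (`pl_fin`), proved by induction on the dimension with Fubini;
the one-dimensional case (`pl_real`) follows from one-dimensional Brunn–Minkowski applied to
superlevel sets. The hyperplane of sum-zero functions has dimension `n² - 1`, so the Hausdorff
measure of that dimension restricts to an additive Haar measure on it (`qPoly_measure`).
-/

open MeasureTheory Filter

noncomputable section

open scoped ENNReal Pointwise

/-! ### The Prékopa–Leindler and Brunn–Minkowski inequalities -/

lemma vol_affine_image (a c : ℝ) (ha : 0 < a) (K : Set ℝ) :
    volume ((fun x => a * x + c) '' K) = ENNReal.ofReal a * volume K := by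
  have : (fun x => a * x + c) '' K = (fun x => x + c) '' (a • K) := by
    rw [← Set.image_smul, Set.image_image]; rfl
  rw [this, Set.image_add_right, measure_preimage_add_right, Measure.addHaar_smul]
  simp [abs_of_pos ha]

/-- One-dimensional Brunn–Minkowski for compact sets: `C` contains `a • K + b * min L` and
`a * max K + b • L`, which meet in at most one point. -/
lemma bm_real_compact {a b : ℝ} (ha : 0 < a) (hb : 0 < b) {K L C : Set ℝ}
    (hK : IsCompact K) (hL : IsCompact L) (hK0 : K.Nonempty) (hL0 : L.Nonempty)
    (h : ∀ x ∈ K, ∀ y ∈ L, a * x + b * y ∈ C) :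
    ENNReal.ofReal a * volume K + ENNReal.ofReal b * volume L ≤ volume C := by
  obtain ⟨M, hMK, hM⟩ := hK.exists_isGreatest hK0
  obtain ⟨m, hmL, hm⟩ := hL.exists_isLeast hL0
  set S := (fun x => a * x + b * m) '' K with hS
  set T := (fun y => b * y + a * M) '' L with hT
  have hTm : MeasurableSet T := (hL.image (by fun_prop)).measurableSet
  have hd : AEDisjoint volume S T := by
    refine measure_mono_null (t := {a * M + b * m}) ?_ (by simp)
    rintro _ ⟨⟨x, hx, rfl⟩, ⟨y, hy, hxy⟩⟩
    have h1 := mul_le_mul_of_nonneg_left (hM hx) ha.le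
    have h2 := mul_le_mul_of_nonneg_left (hm hy) hb.le
    simp only [Set.mem_singleton_iff] at *
    linarith
  rw [← vol_affine_image a (b * m) ha, ← vol_affine_image b (a * M) hb,
    ← measure_union₀ hTm.nullMeasurableSet hd]
  refine measure_mono (Set.union_subset ?_ ?_)
  · rintro _ ⟨x, hx, rfl⟩; exact h x hx m hmL
  · rintro _ ⟨y, hy, rfl⟩
    have := h M hMK y hy
    simpa [add_comm] using this

/-- One-dimensional Brunn–Minkowski for measurable sets, by inner regularity. -/
lemma bm_real {a b : ℝ} (ha : 0 < a) (hb : 0 < b) {A B C : Set ℝ}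
    (hA : MeasurableSet A) (hB : MeasurableSet B) (hA0 : A.Nonempty) (hB0 : B.Nonempty)
    (h : ∀ x ∈ A, ∀ y ∈ B, a * x + b * y ∈ C) :
    ENNReal.ofReal a * volume A + ENNReal.ofReal b * volume B ≤ volume C := by
  obtain ⟨x₀, hx₀⟩ := hA0
  obtain ⟨y₀, hy₀⟩ := hB0
  simp only [hA.measure_eq_iSup_isCompact, hB.measure_eq_iSup_isCompact, iSup_and',
    ENNReal.mul_iSup]
  refine ENNReal.biSup_add_biSup_le' ⟨∅, by simp⟩ ⟨∅, by simp⟩ ?_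
  rintro K ⟨hKA, hK⟩ L ⟨hLB, hL⟩
  -- adjoining a point of `A` (of `B`) makes the compact sets nonempty
  refine le_trans ?_ (bm_real_compact ha hb (hK.insert x₀) (hL.insert y₀)
    (Set.insert_nonempty _ _) (Set.insert_nonempty _ _) ?_)
  · gcongr <;> exact Set.subset_insert _ _
  · intro x hx y hy
    exact h x (Set.insert_subset hx₀ hKA hx) y (Set.insert_subset hy₀ hLB hy)

/-- Weighted AM–GM in `ℝ≥0∞`. -/
lemma ennreal_amgm {a b : ℝ} (ha : 0 < a) (hb : 0 < b) (hab : a + b = 1) (x y : ℝ≥0∞) :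
    x ^ a * y ^ b ≤ ENNReal.ofReal a * x + ENNReal.ofReal b * y := by
  rcases eq_or_ne x ⊤ with rfl | hx
  · rw [ENNReal.mul_top (by simpa using ha)]; simp
  rcases eq_or_ne y ⊤ with rfl | hy
  · rw [ENNReal.mul_top (by simpa using hb)]; simp
  lift x to NNReal using hx
  lift y to NNReal using hy
  have := NNReal.geom_mean_le_arith_mean2_weighted ⟨a, ha.le⟩ ⟨b, hb.le⟩ x y
    (by ext; exact hab)
  rw [← ENNReal.coe_rpow_of_nonneg _ ha.le, ← ENNReal.coe_rpow_of_nonneg _ hb.le,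
    ENNReal.ofReal_eq_coe_nnreal ha.le, ENNReal.ofReal_eq_coe_nnreal hb.le]
  exact_mod_cast this

/-- Layer-cake formula for a function bounded by `1`. -/
lemma lintegral_layer (f : ℝ → ℝ≥0∞) (hf : Measurable f) (h1 : ∀ x, f x ≤ 1) :
    ∫⁻ x, f x = ∫⁻ t in Set.Ioo (0 : ℝ) 1, volume {x | ENNReal.ofReal t < f x} := by
  have h := lintegral_eq_lintegral_meas_lt (volume : Measure ℝ) (f := fun x => (f x).toReal)
    (ae_of_all _ fun x => ENNReal.toReal_nonneg) hf.ennreal_toReal.aemeasurable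
  have e : ∀ x, ENNReal.ofReal (f x).toReal = f x := fun x =>
    ENNReal.ofReal_toReal ((h1 x).trans_lt ENNReal.one_lt_top).ne
  simp only [e] at h
  rw [h, ← lintegral_indicator measurableSet_Ioi, ← lintegral_indicator measurableSet_Ioo]
  refine lintegral_congr fun t => ?_
  by_cases ht0 : 0 < t
  · have e2 : {x | t < (f x).toReal} = {x | ENNReal.ofReal t < f x} := by
      ext x
      simp only [Set.mem_ofPred_eq]
      rw [ENNReal.ofReal_lt_iff_lt_toReal ht0.le ((h1 x).trans_lt ENNReal.one_lt_top).ne]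
    by_cases ht1 : t < 1
    · simp [Set.indicator, ht0, ht1, e2]
    · have : {x | ENNReal.ofReal t < f x} = ∅ := by
        ext x
        simp only [Set.mem_ofPred_eq, Set.mem_empty_iff_false, iff_false, not_lt]
        exact (h1 x).trans (by simpa using not_lt.1 ht1)
      simp [Set.indicator, ht0, ht1, e2, this]
  · simp [Set.indicator, ht0]

/-- Prékopa–Leindler on `ℝ` when `sup f = sup g = 1`. For `0 < t < 1` the superlevel sets of `f` and
`g` are nonempty and their weighted sum lies in that of `min h 1`, so one-dimensional
Brunn–Minkowski can be integrated over `t`. -/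
lemma pl_real_norm {a b : ℝ} (ha : 0 < a) (hb : 0 < b) (hab : a + b = 1) {f g h : ℝ → ℝ≥0∞}
    (hf : Measurable f) (hg : Measurable g) (hh : Measurable h)
    (hf1 : ⨆ x, f x = 1) (hg1 : ⨆ x, g x = 1)
    (H : ∀ x y, f x ^ a * g y ^ b ≤ h (a * x + b * y)) :
    (∫⁻ x, f x) ^ a * (∫⁻ x, g x) ^ b ≤ ∫⁻ x, h x := by
  refine (ennreal_amgm ha hb hab _ _).trans ?_
  have hh' : ∫⁻ x, min (h x) 1 ≤ ∫⁻ x, h x := lintegral_mono fun x => min_le_left _ _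
  refine le_trans ?_ hh'
  rw [lintegral_layer f hf fun x => hf1 ▸ le_iSup f x,
    lintegral_layer g hg fun x => hg1 ▸ le_iSup g x,
    lintegral_layer _ (hh.min measurable_const) fun x => min_le_right _ _]
  have anti : ∀ u : ℝ → ℝ≥0∞, Measurable fun t : ℝ => volume {x | ENNReal.ofReal t < u x} := by
    intro u
    refine Antitone.measurable fun s t hst => measure_mono fun x hx => ?_
    exact (ENNReal.ofReal_le_ofReal hst).trans_lt hx
  rw [← lintegral_const_mul _ (anti f), ← lintegral_const_mul _ (anti g),
    ← lintegral_add_left ((anti f).const_mul _)]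
  refine setLIntegral_mono' measurableSet_Ioo fun t ht => ?_
  have ht1 : ENNReal.ofReal t < 1 := by simpa using ht.2
  have ht0 : ENNReal.ofReal t ≠ 0 := by simpa using ht.1
  refine bm_real ha hb (measurableSet_lt measurable_const hf)
    (measurableSet_lt measurable_const hg) ?_ ?_ ?_
  · exact lt_iSup_iff.1 (hf1 ▸ ht1)
  · exact lt_iSup_iff.1 (hg1 ▸ ht1)
  · intro x hx y hy
    refine lt_min (lt_of_lt_of_le ?_ (H x y)) ht1
    calc ENNReal.ofReal t = ENNReal.ofReal t ^ a * ENNReal.ofReal t ^ b := by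
          rw [← ENNReal.rpow_add_of_nonneg _ _ ha.le hb.le, hab, ENNReal.rpow_one]
      _ < _ := ENNReal.mul_lt_mul (ENNReal.rpow_lt_rpow hx ha) (ENNReal.rpow_lt_rpow hy hb)

/-- Prékopa–Leindler on `ℝ` for bounded `f` and `g`, by rescaling to suprema `1`. -/
lemma pl_real_bdd {a b : ℝ} (ha : 0 < a) (hb : 0 < b) (hab : a + b = 1) {f g h : ℝ → ℝ≥0∞}
    (hf : Measurable f) (hg : Measurable g) (hh : Measurable h)
    (hf1 : ⨆ x, f x ≠ ⊤) (hg1 : ⨆ x, g x ≠ ⊤)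
    (H : ∀ x y, f x ^ a * g y ^ b ≤ h (a * x + b * y)) :
    (∫⁻ x, f x) ^ a * (∫⁻ x, g x) ^ b ≤ ∫⁻ x, h x := by
  set F := ⨆ x, f x with hF
  set G := ⨆ x, g x with hG
  rcases eq_or_ne F 0 with hF0 | hF0
  · have : ∀ x, f x = 0 := fun x => le_antisymm (hF0 ▸ le_iSup f x) bot_le
    simp [this, ENNReal.zero_rpow_of_pos ha]
  rcases eq_or_ne G 0 with hG0 | hG0
  · have : ∀ x, g x = 0 := fun x => le_antisymm (hG0 ▸ le_iSup g x) bot_le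
    simp [this, ENNReal.zero_rpow_of_pos hb]
  have key := pl_real_norm ha hb hab (f := fun x => F⁻¹ * f x) (g := fun x => G⁻¹ * g x)
    (h := fun x => ((F⁻¹) ^ a * (G⁻¹) ^ b) * h x) (hf.const_mul _) (hg.const_mul _) (hh.const_mul _)
    (by rw [← ENNReal.mul_iSup, ENNReal.inv_mul_cancel hF0 hf1])
    (by rw [← ENNReal.mul_iSup, ENNReal.inv_mul_cancel hG0 hg1])
    (fun x y => by
      rw [ENNReal.mul_rpow_of_nonneg _ _ ha.le, ENNReal.mul_rpow_of_nonneg _ _ hb.le,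
        mul_mul_mul_comm]
      gcongr
      exact H x y)
  rw [lintegral_const_mul _ hf, lintegral_const_mul _ hg, lintegral_const_mul _ hh,
    ENNReal.mul_rpow_of_nonneg _ _ ha.le, ENNReal.mul_rpow_of_nonneg _ _ hb.le,
    mul_mul_mul_comm] at key
  refine (ENNReal.mul_le_mul_iff_right ?_ ?_).1 key
  · simp [ha, hb, hf1, hg1, ha.le, hb.le]
  · refine ENNReal.mul_ne_top ?_ ?_ <;> refine ENNReal.rpow_ne_top_of_nonneg (by positivity) ?_ <;>
    simpa

/-- Prékopa–Leindler on `ℝ`, by truncating `f` and `g` at height `k` and letting `k → ∞`. -/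
theorem pl_real {a b : ℝ} (ha : 0 < a) (hb : 0 < b) (hab : a + b = 1) {f g h : ℝ → ℝ≥0∞}
    (hf : Measurable f) (hg : Measurable g) (hh : Measurable h)
    (H : ∀ x y, f x ^ a * g y ^ b ≤ h (a * x + b * y)) :
    (∫⁻ x, f x) ^ a * (∫⁻ x, g x) ^ b ≤ ∫⁻ x, h x := by
  have lim : ∀ u : ℝ → ℝ≥0∞, Measurable u →
      Tendsto (fun k : ℕ => ∫⁻ x, min (u x) k) atTop (nhds (∫⁻ x, u x)) := by
    intro u hu
    refine lintegral_tendsto_of_tendsto_of_monotone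
      (fun k => (hu.min measurable_const).aemeasurable)
      (ae_of_all _ fun x k l hkl => min_le_min_left _ (by exact_mod_cast hkl))
      (ae_of_all _ fun x => ?_)
    simpa using tendsto_const_nhds.min ENNReal.tendsto_nat_nhds_top
  have bd : ∀ (u : ℝ → ℝ≥0∞) (k : ℕ), ⨆ x, min (u x) (k : ℝ≥0∞) ≠ ⊤ := fun u k =>
    ((iSup_le fun x => min_le_right _ _).trans_lt (ENNReal.natCast_lt_top k)).ne
  rcases eq_or_ne (∫⁻ x, f x) 0 with hf0 | hf0
  · simp [hf0, ENNReal.zero_rpow_of_pos ha]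
  rcases eq_or_ne (∫⁻ x, g x) 0 with hg0 | hg0
  · simp [hg0, ENNReal.zero_rpow_of_pos hb]
  have T := ENNReal.Tendsto.mul
    ((ENNReal.continuous_rpow_const (y := a)).tendsto _ |>.comp (lim f hf))
    (Or.inl (by simp [hf0, ha, ha.le]))
    ((ENNReal.continuous_rpow_const (y := b)).tendsto _ |>.comp (lim g hg))
    (Or.inl (by simp [hg0, hb, hb.le]))
  refine le_of_tendsto' T fun k => ?_
  refine pl_real_bdd ha hb hab (hf.min measurable_const) (hg.min measurable_const) hh
    (bd f k) (bd g k) fun x y => le_trans ?_ (H x y)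
  gcongr <;> exact min_le_left _ _

/-- Prékopa–Leindler on `ℝ^d`: by the case of dimension `d`, the partial integrals over the last `d`
of `d + 1` coordinates satisfy the one-dimensional hypothesis. -/
theorem pl_fin {a b : ℝ} (ha : 0 < a) (hb : 0 < b) (hab : a + b = 1) (d : ℕ) :
    ∀ {f g h : (Fin d → ℝ) → ℝ≥0∞}, Measurable f → Measurable g → Measurable h →
    (∀ x y, f x ^ a * g y ^ b ≤ h (a • x + b • y)) →
    (∫⁻ x, f x) ^ a * (∫⁻ x, g x) ^ b ≤ ∫⁻ x, h x := by
  induction d with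
  | zero =>
    intro f g h _ _ _ H
    simpa [volume_pi, Measure.pi_of_empty _ (0 : Fin 0 → ℝ)] using
      (H 0 0).trans (le_of_eq (congrArg h (Subsingleton.elim _ _)))
  | succ d ih =>
    intro f g h hf hg hh H
    let e := (MeasurableEquiv.piFinSuccAbove (fun _ : Fin (d + 1) => ℝ) 0).symm
    have he : MeasurePreserving e := (volume_preserving_piFinSuccAbove (fun _ => ℝ) 0).symm _
    have fub : ∀ u : (Fin (d + 1) → ℝ) → ℝ≥0∞, Measurable u →
        ∫⁻ x, u x = ∫⁻ s, ∫⁻ y, u (e (s, y)) := by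
      intro u hu
      rw [← he.lintegral_comp hu, Measure.volume_eq_prod]
      exact lintegral_prod _ (hu.comp e.measurable).aemeasurable
    have meas : ∀ u : (Fin (d + 1) → ℝ) → ℝ≥0∞, Measurable u →
        Measurable fun s => ∫⁻ y, u (e (s, y)) := fun u hu =>
      (hu.comp e.measurable).lintegral_prod_right'
    rw [fub f hf, fub g hg, fub h hh]
    refine pl_real ha hb hab (meas f hf) (meas g hg) (meas h hh) fun s t => ?_
    refine ih (hf.comp (e.measurable.comp measurable_prodMk_left))
      (hg.comp (e.measurable.comp measurable_prodMk_left))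
      (hh.comp (e.measurable.comp measurable_prodMk_left)) fun x y => ?_
    refine (H (e (s, x)) (e (t, y))).trans (le_of_eq (congrArg h ?_))
    ext i
    refine Fin.cases ?_ (fun i => ?_) i <;>
      simp [e, MeasurableEquiv.piFinSuccAbove, Fin.insertNthEquiv]

open Module in
/-- Multiplicative Brunn–Minkowski inequality for an additive Haar measure. -/
theorem bm_haar {E : Type*} [NormedAddCommGroup E] [NormedSpace ℝ E] [FiniteDimensional ℝ E]
    [MeasurableSpace E] [BorelSpace E] (μ : Measure E) [μ.IsAddHaarMeasure]
    {a b : ℝ} (ha : 0 < a) (hb : 0 < b) (hab : a + b = 1) {A B C : Set E}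
    (hA : MeasurableSet A) (hB : MeasurableSet B) (hC : MeasurableSet C)
    (H : ∀ x ∈ A, ∀ y ∈ B, a • x + b • y ∈ C) :
    μ A ^ a * μ B ^ b ≤ μ C := by
  let e : E ≃L[ℝ] (Fin (finrank ℝ E) → ℝ) := ContinuousLinearEquiv.ofFinrankEq (by simp)
  have hme : Measurable e.symm := e.symm.continuous.measurable
  have : (Measure.map e.symm volume : Measure E).IsAddHaarMeasure :=
    e.symm.isAddHaarMeasure_map _
  rw [Measure.isAddLeftInvariant_eq_smul μ (Measure.map e.symm volume)]
  set c := Measure.addHaarScalarFactor μ (Measure.map e.symm volume)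
  have val : ∀ S : Set E, MeasurableSet S → (Measure.map e.symm volume) S =
      ∫⁻ x, (e.symm ⁻¹' S).indicator 1 x := fun S hS => by
    rw [Measure.map_apply hme hS, lintegral_indicator_one (hme hS)]
  have key := pl_fin ha hb hab (finrank ℝ E)
    (f := (e.symm ⁻¹' A).indicator 1) (g := (e.symm ⁻¹' B).indicator 1)
    (h := (e.symm ⁻¹' C).indicator 1) (measurable_one.indicator (hme hA))
    (measurable_one.indicator (hme hB)) (measurable_one.indicator (hme hC)) (fun x y => by
      by_cases hx : e.symm x ∈ A
      · by_cases hy : e.symm y ∈ B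
        · have := H _ hx _ hy
          simp [Set.indicator, hx, hy, this]
        · simp [Set.indicator, hy, hb]
      · simp [Set.indicator, hx, ha])
  rw [← val A hA, ← val B hB, ← val C hC] at key
  simp only [Measure.smul_apply, ENNReal.smul_def, smul_eq_mul]
  rw [ENNReal.mul_rpow_of_nonneg _ _ ha.le, ENNReal.mul_rpow_of_nonneg _ _ hb.le,
    mul_mul_mul_comm, ← ENNReal.rpow_add_of_nonneg _ _ ha.le hb.le, hab, ENNReal.rpow_one]
  gcongr

/-! ### Polytopes on the torus -/

/-- The translation vector `(a, b)` of the torus `Fin n × Fin n`, as a group element. -/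
def tvec (n : ℕ) [NeZero n] (a b : ℕ) : Fin n × Fin n := (Fin.ofNat n a, Fin.ofNat n b)

lemma tshift_eq {n : ℕ} [NeZero n] (a b : ℕ) (v : Fin n × Fin n) :
    tshift a b v = v + tvec n a b := by
  ext <;> simp [tshift, tvec, Fin.val_add]

/-- Translation `g ↦ g (· - w)` of functions on the torus, as a linear isometry. -/
def shiftIso {n : ℕ} [NeZero n] (w : Fin n × Fin n) :
    EuclideanSpace ℝ (Fin n × Fin n) ≃ₗᵢ[ℝ] EuclideanSpace ℝ (Fin n × Fin n) :=
  LinearIsometryEquiv.piLpCongrLeft 2 ℝ ℝ (Equiv.addRight w)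

lemma shiftIso_apply {n : ℕ} [NeZero n] (w : Fin n × Fin n)
    (g : EuclideanSpace ℝ (Fin n × Fin n)) (v : Fin n × Fin n) :
    shiftIso w g v = g (v - w) := by
  simp [shiftIso, LinearIsometryEquiv.piLpCongrLeft_apply, Equiv.piCongrLeft', sub_eq_add_neg]

lemma rdiff_shiftIso {n : ℕ} [NeZero n] (i : Fin 3) (w v : Fin n × Fin n)
    (g : EuclideanSpace ℝ (Fin n × Fin n)) :
    rdiff i (shiftIso w g) v = rdiff i g (v - w) := by
  simp only [rdiff, shiftIso_apply, tshift_eq, add_sub_right_comm]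

lemma rdiff_combo {n : ℕ} (i : Fin 3) (v : Fin n × Fin n) (a b : ℝ)
    (g h : EuclideanSpace ℝ (Fin n × Fin n)) :
    rdiff i (a • g + b • h) v = a * rdiff i g v + b * rdiff i h v := by
  simp only [rdiff, PiLp.add_apply, PiLp.smul_apply, smul_eq_mul]
  split_ifs <;> ring

lemma continuous_rdiff {n : ℕ} (i : Fin 3) (v : Fin n × Fin n) :
    Continuous fun g : EuclideanSpace ℝ (Fin n × Fin n) => rdiff i g v := by
  unfold rdiff
  split_ifs <;> fun_prop

/-- The polytope `Q_n(t)`: sum-zero functions whose rhombus differences are bounded by `t`. -/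
def qPoly (n : ℕ) (t : Fin 3 → (Fin n × Fin n) → ℝ) : Set (EuclideanSpace ℝ (Fin n × Fin n)) :=
  {g | (∑ v, g v) = 0 ∧ ∀ (i : Fin 3) (v : Fin n × Fin n), rdiff i g v ≤ t i v}

lemma isClosed_qPoly (n : ℕ) (t : Fin 3 → (Fin n × Fin n) → ℝ) : IsClosed (qPoly n t) := by
  have : qPoly n t = {g | (∑ v, g v) = 0} ∩ ⋂ i, ⋂ v, {g | rdiff i g v ≤ t i v} := by
    ext g; simp [qPoly]
  rw [this]
  refine (isClosed_eq (by fun_prop) continuous_const).inter ?_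
  exact isClosed_iInter fun i => isClosed_iInter fun v =>
    isClosed_le (continuous_rdiff i v) continuous_const

/-- The hyperplane of sum-zero functions. -/
def sumZero (n : ℕ) : Submodule ℝ (EuclideanSpace ℝ (Fin n × Fin n)) :=
  LinearMap.ker (∑ v : Fin n × Fin n, (EuclideanSpace.proj v :
    EuclideanSpace ℝ (Fin n × Fin n) →L[ℝ] ℝ).toLinearMap)

lemma mem_sumZero {n : ℕ} (g : EuclideanSpace ℝ (Fin n × Fin n)) :
    g ∈ sumZero n ↔ ∑ v, g v = 0 := by
  simp [sumZero]

lemma finrank_sumZero (n : ℕ) (hn : 0 < n) :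
    (Module.finrank ℝ (sumZero n) : ℝ) = (n : ℝ) ^ 2 - 1 := by
  have : NeZero n := ⟨hn.ne'⟩
  set φ : EuclideanSpace ℝ (Fin n × Fin n) →ₗ[ℝ] ℝ := ∑ v : Fin n × Fin n, (EuclideanSpace.proj v :
    EuclideanSpace ℝ (Fin n × Fin n) →L[ℝ] ℝ).toLinearMap with hφ
  have hne : φ ≠ 0 := by
    intro h
    have := LinearMap.congr_fun h (EuclideanSpace.single 0 1)
    simp [hφ] at this
  have h1 := LinearMap.finrank_range_add_finrank_ker φ
  rw [LinearMap.range_eq_top.2 (LinearMap.surjective hne)] at h1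
  have h2 : 1 + Module.finrank ℝ (sumZero n) = n * n := by
    have h2 : sumZero n = LinearMap.ker φ := rfl
    rw [h2]
    simpa using h1
  have h3 : (1 : ℝ) + Module.finrank ℝ (sumZero n) = n * n := by exact_mod_cast h2
  rw [pow_two, ← h3]; ring

/-- The ambient Hausdorff measure of `Q_n(t)` is the Hausdorff measure intrinsic to the hyperplane,
which is an additive Haar measure there. -/
lemma qPoly_measure (n : ℕ) (hn : 0 < n) (t : Fin 3 → (Fin n × Fin n) → ℝ) :
    μH[((n : ℝ) ^ 2 - 1)] (qPoly n t) =
      μH[(Module.finrank ℝ (sumZero n) : ℝ)] ((↑) ⁻¹' qPoly n t : Set (sumZero n)) := by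
  have hiso : Isometry ((↑) : sumZero n → EuclideanSpace ℝ (Fin n × Fin n)) :=
    isometry_subtype_coe
  rw [← finrank_sumZero n hn, hiso.hausdorffMeasure_preimage (Or.inl (Nat.cast_nonneg _)),
    Set.inter_eq_left.2]
  intro g hg
  exact ⟨⟨g, (mem_sumZero g).2 hg.1⟩, rfl⟩

/-- `t ↦ |Q_n(t)|` is quasi-concave: `a • Q_n(t) + b • Q_n(u) ⊆ Q_n(a • t + b • u)`, and the
Brunn–Minkowski inequality applies. -/
lemma convex_superlevel (n : ℕ) (hn : 0 < n) (c : ℝ≥0∞) :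
    Convex ℝ {t : Fin 3 → (Fin n × Fin n) → ℝ | c ≤ μH[((n : ℝ) ^ 2 - 1)] (qPoly n t)} := by
  rw [convex_iff_forall_pos]
  intro t ht u hu a b ha hb hab
  simp only [Set.mem_ofPred_eq, qPoly_measure n hn] at *
  have hm : ∀ t, MeasurableSet ((↑) ⁻¹' qPoly n t : Set (sumZero n)) := fun t =>
    ((isClosed_qPoly n t).preimage continuous_subtype_val).measurableSet
  calc c = c ^ a * c ^ b := by
        rw [← ENNReal.rpow_add_of_nonneg _ _ ha.le hb.le, hab, ENNReal.rpow_one]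
    _ ≤ _ := by gcongr
    _ ≤ _ := bm_haar μH[(Module.finrank ℝ (sumZero n) : ℝ)] ha hb hab (hm t) (hm u) (hm _) ?_
  intro x hx y hy
  refine ⟨(mem_sumZero _).1 (a • x + b • y).2, fun i v => ?_⟩
  have h1 := mul_le_mul_of_nonneg_left (hx.2 i v) ha.le
  have h2 := mul_le_mul_of_nonneg_left (hy.2 i v) hb.le
  have h3 := rdiff_combo i v a b (x : EuclideanSpace ℝ (Fin n × Fin n)) y
  simp only [Submodule.coe_add, Submodule.coe_smul, h3, Pi.add_apply, Pi.smul_apply, smul_eq_mul]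
  linarith

/-- Translating the bounds `t` does not change the volume, since translation of functions is an
isometry preserving the hyperplane. -/
lemma qPoly_shift (n : ℕ) [NeZero n] (d : ℝ) (t : Fin 3 → (Fin n × Fin n) → ℝ)
    (w : Fin n × Fin n) :
    μH[d] (qPoly n fun i v => t i (v + w)) = μH[d] (qPoly n t) := by
  rw [← (shiftIso w).toIsometryEquiv.hausdorffMeasure_preimage d (qPoly n t)]
  congr 1
  ext g
  have hsum : ∑ v, shiftIso w g v = ∑ v, g v := by
    simp only [shiftIso_apply]
    exact (Equiv.subRight w).sum_comp fun v => g v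
  simp only [qPoly, Set.mem_ofPred_eq, Set.mem_preimage, LinearIsometryEquiv.coe_toIsometryEquiv,
    hsum, rdiff_shiftIso]
  refine and_congr_right fun _ => forall_congr' fun i => ⟨fun h v => ?_, fun h v => ?_⟩
  · simpa using h (v - w)
  · simpa using h (v + w)

/-- If `t` assigns a nonnegative bound `t i v` to each rhombus and `Σ_v t i v = n² sᵢ` for each
`i`, then the polytope `Q_n(t)` (sum-zero functions with `Δᵢ g(v) ≤ t i v`) has
`(n²−1)`-dimensional measure at most that of `P_n(s)`. -/
theorem stmt_13 (n : ℕ) (hn : 0 < n) (s : Fin 3 → ℝ) (hs : ∀ i, 0 < s i)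
    (t : Fin 3 → (Fin n × Fin n) → ℝ) (ht : ∀ i v, 0 ≤ t i v)
    (hsum : ∀ i, ∑ v, t i v = (n : ℝ) ^ 2 * s i) :
    μH[((n : ℝ) ^ 2 - 1)]
        {g : EuclideanSpace ℝ (Fin n × Fin n) |
          (∑ v, g v) = 0 ∧ ∀ (i : Fin 3) (v : Fin n × Fin n), rdiff i g v ≤ t i v} ≤
      μH[((n : ℝ) ^ 2 - 1)] (torusPoly n s) := by
  have : NeZero n := ⟨hn.ne'⟩
  change μH[((n : ℝ) ^ 2 - 1)] (qPoly n t) ≤ μH[((n : ℝ) ^ 2 - 1)] (qPoly n fun i _ => s i)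
  have hn0 : (n : ℝ) ≠ 0 := by exact_mod_cast hn.ne'
  -- the constant bound `s` is the average of all translates of `t`
  have havg : (fun (i : Fin 3) (_ : Fin n × Fin n) => s i) =
      ∑ w : Fin n × Fin n, ((n : ℝ) ^ 2)⁻¹ • fun i v => t i (v + w) := by
    ext i v
    have : ∑ w, t i (v + w) = (n : ℝ) ^ 2 * s i := by
      rw [← hsum i]
      exact Equiv.sum_comp (Equiv.addLeft v) (t i)
    simp only [Finset.sum_apply, Pi.smul_apply, smul_eq_mul, ← Finset.mul_sum, this]
    field_simp
  rw [havg]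
  refine (convex_superlevel n hn (μH[((n : ℝ) ^ 2 - 1)] (qPoly n t))).sum_mem
    (fun _ _ => by positivity) ?_ fun w _ => (qPoly_shift n _ t w).ge
  simp [Finset.card_univ, pow_two]
  field_simp
end
end

section
/- Let x₀ < x₁ be reals, let f : [x₀, x₁] → ℝ be Lipschitz and strongly concave, and fix ε₇ > 0. Then there exists ε₈ > 0 such that for every Lipschitz concave function f̃ : [x₀, x₁] → ℝ with sup_{x∈[x₀,x₁]} |f(x) − f̃(x)| < ε₈, the set of points x' ∈ (x₀, x₁) at which both the right derivative ∂⁺f̃(x') and the left derivative ∂⁻f̃(x') lie in the interval [∂⁺f(x') − ε₇, ∂⁻f(x') + ε₇] has Lebesgue measure at least x₁ − x₀ − ε₇. -/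
/-! By concavity of `g`, every `x` with `x ± h` in the interval satisfies
`slope g x (x + h) ≤ ∂⁺g(x) ≤ ∂⁻g(x) ≤ slope g x (x - h)`, and the slopes of `g` with step `h`
differ from those of `f` by at most `2 ε₈ / h`. So it suffices that, for some single step `h`, the
slopes of `f` with step `h` are `ε₇ / 2`-close to the one-sided derivatives of `f` on a set of
measure at least `x₁ - x₀ - ε₇`; then `ε₈ = ε₇ h / 4` works. Since `f` has one-sided derivatives
everywhere inside, the set of points good for all steps `1 / (m + 1)`, `m ≥ n`, increases with `n`
to the whole open interval, and continuity of the measure from below supplies `n`. -/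

open MeasureTheory

noncomputable section

lemma hasRightDeriv_of_concaveOn {a b x : ℝ} {φ : ℝ → ℝ} (hφ : ConcaveOn ℝ (Set.Icc a b) φ)
    (hx : x ∈ Set.Ioo a b) :
    HasDerivWithinAt φ (derivWithin φ (Set.Ioi x) x) (Set.Ioi x) x := by
  have hx' : x ∈ interior (Set.Icc a b) := by rwa [interior_Icc]
  have h := (hφ.neg.differentiableWithinAt_Ioi_of_mem_interior hx').neg
  rw [neg_neg] at h
  exact h.hasDerivWithinAt

lemma hasLeftDeriv_of_concaveOn {a b x : ℝ} {φ : ℝ → ℝ} (hφ : ConcaveOn ℝ (Set.Icc a b) φ)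
    (hx : x ∈ Set.Ioo a b) :
    HasDerivWithinAt φ (derivWithin φ (Set.Iio x) x) (Set.Iio x) x := by
  have hx' : x ∈ interior (Set.Icc a b) := by rwa [interior_Icc]
  have h := (hφ.neg.differentiableWithinAt_Iio_of_mem_interior hx').neg
  rw [neg_neg] at h
  exact h.hasDerivWithinAt

lemma rightDeriv_le_leftDeriv_of_concaveOn {a b x : ℝ} {φ : ℝ → ℝ}
    (hφ : ConcaveOn ℝ (Set.Icc a b) φ) (hx : x ∈ Set.Ioo a b) :
    derivWithin φ (Set.Ioi x) x ≤ derivWithin φ (Set.Iio x) x := by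
  have hx' : x ∈ interior (Set.Icc a b) := by rwa [interior_Icc]
  have h := hφ.neg.leftDeriv_le_rightDeriv_of_mem_interior hx'
  rw [derivWithin.neg, derivWithin.neg] at h
  linarith

/-- The points whose difference quotients of `f` with step `h` stay in the interval and are
within `δ`, on the relevant side, of the one-sided derivatives of `f`. -/
def goodStep (x₀ x₁ : ℝ) (f : ℝ → ℝ) (δ h : ℝ) : Set ℝ :=
  {x | x₀ < x - h ∧ x + h < x₁ ∧
    derivWithin f (Set.Ioi x) x - δ < slope f x (x + h) ∧
    slope f x (x - h) < derivWithin f (Set.Iio x) x + δ}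

lemma eventually_mem_goodStep {x₀ x₁ x δ : ℝ} {f : ℝ → ℝ} (hf : ConcaveOn ℝ (Set.Icc x₀ x₁) f)
    (hδ : 0 < δ) (hx : x ∈ Set.Ioo x₀ x₁) :
    ∀ᶠ n : ℕ in Filter.atTop, x ∈ goodStep x₀ x₁ f δ (1 / ((n : ℝ) + 1)) := by
  have h0 := tendsto_one_div_add_atTop_nhds_zero_nat (𝕜 := ℝ)
  have hp : Filter.Tendsto (fun n : ℕ => x + 1 / ((n : ℝ) + 1)) Filter.atTop (nhds x) := by
    simpa using h0.const_add x
  have hm : Filter.Tendsto (fun n : ℕ => x - 1 / ((n : ℝ) + 1)) Filter.atTop (nhds x) := by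
    simpa using h0.const_sub x
  have hpos : ∀ n : ℕ, 0 < 1 / ((n : ℝ) + 1) := fun n => by positivity
  have hp' : Filter.Tendsto (fun n : ℕ => x + 1 / ((n : ℝ) + 1)) Filter.atTop
      (nhdsWithin x (Set.Ioi x)) :=
    tendsto_nhdsWithin_iff.2 ⟨hp, .of_forall fun n => lt_add_of_pos_right x (hpos n)⟩
  have hm' : Filter.Tendsto (fun n : ℕ => x - 1 / ((n : ℝ) + 1)) Filter.atTop
      (nhdsWithin x (Set.Iio x)) :=
    tendsto_nhdsWithin_iff.2 ⟨hm, .of_forall fun n => sub_lt_self x (hpos n)⟩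
  have hr := ((hasDerivWithinAt_iff_tendsto_slope' Set.self_notMem_Ioi).1
    (hasRightDeriv_of_concaveOn hf hx)).comp hp'
  have hl := ((hasDerivWithinAt_iff_tendsto_slope' Set.self_notMem_Iio).1
    (hasLeftDeriv_of_concaveOn hf hx)).comp hm'
  filter_upwards [hm.eventually_const_lt hx.1, hp.eventually_lt_const hx.2,
    hr.eventually_const_lt (sub_lt_self _ hδ),
    hl.eventually_lt_const (lt_add_of_pos_right _ hδ)] with n h1 h2 h3 h4
  exact ⟨h1, h2, h3, h4⟩

/-- A single step size serves for all points up to measure `ε`. -/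
lemma exists_goodStep_volume {x₀ x₁ δ ε : ℝ} {f : ℝ → ℝ} (hx : x₀ < x₁)
    (hf : ConcaveOn ℝ (Set.Icc x₀ x₁) f) (hδ : 0 < δ) (hε : 0 < ε) :
    ∃ h : ℝ, 0 < h ∧ ENNReal.ofReal (x₁ - x₀ - ε) ≤ volume (goodStep x₀ x₁ f δ h) := by
  set G : ℕ → Set ℝ := fun n => {x | ∀ m ≥ n, x ∈ goodStep x₀ x₁ f δ (1 / ((m : ℝ) + 1))} with hG
  have hmono : Monotone G := fun a b hab x hxa m hm => hxa m (hab.trans hm)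
  have hsub : Set.Ioo x₀ x₁ ⊆ ⋃ n, G n := fun x hxI => by
    obtain ⟨n, hn⟩ := Filter.eventually_atTop.1 (eventually_mem_goodStep hf hδ hxI)
    exact Set.mem_iUnion.2 ⟨n, hn⟩
  have hlt : ENNReal.ofReal (x₁ - x₀ - ε) < ⨆ n, volume (G n) := by
    rw [← hmono.measure_iUnion]
    refine lt_of_lt_of_le ?_ (measure_mono hsub)
    rw [Real.volume_Ioo]
    exact (ENNReal.ofReal_lt_ofReal_iff (by linarith)).2 (by linarith)
  obtain ⟨n, hn⟩ := lt_iSup_iff.1 hlt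
  exact ⟨1 / ((n : ℝ) + 1), by positivity,
    hn.le.trans (measure_mono fun x hxn => hxn n le_rfl)⟩

/-- Let `f` be Lipschitz and strongly concave on `[x₀, x₁]` and `ε₇ > 0`. Then there is
`ε₈ > 0` such that for every Lipschitz concave `g` on `[x₀, x₁]` uniformly within `ε₈` of `f`,
the set of interior points `x` at which both one-sided derivatives of `g` lie in
`[∂⁺f(x) − ε₇, ∂⁻f(x) + ε₇]` has Lebesgue measure at least `x₁ − x₀ − ε₇`. -/
theorem stmt_14 (x₀ x₁ : ℝ) (hx : x₀ < x₁) (f : ℝ → ℝ)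
    (hlip : ∃ K : NNReal, LipschitzOnWith K f (Set.Icc x₀ x₁))
    (hsc : ∃ c : ℝ, 0 < c ∧ ConcaveOn ℝ (Set.Icc x₀ x₁) (fun x => f x + c / 2 * x ^ 2))
    (ε₇ : ℝ) (hε₇ : 0 < ε₇) :
    ∃ ε₈ : ℝ, 0 < ε₈ ∧ ∀ g : ℝ → ℝ,
      (∃ K : NNReal, LipschitzOnWith K g (Set.Icc x₀ x₁)) →
      ConcaveOn ℝ (Set.Icc x₀ x₁) g →
      (∀ x ∈ Set.Icc x₀ x₁, |f x - g x| < ε₈) →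
      ENNReal.ofReal (x₁ - x₀ - ε₇) ≤
        volume {x ∈ Set.Ioo x₀ x₁ |
          derivWithin g (Set.Ioi x) x ∈
            Set.Icc (derivWithin f (Set.Ioi x) x - ε₇) (derivWithin f (Set.Iio x) x + ε₇) ∧
          derivWithin g (Set.Iio x) x ∈
            Set.Icc (derivWithin f (Set.Ioi x) x - ε₇) (derivWithin f (Set.Iio x) x + ε₇)} := by
  obtain ⟨c, hc, hcon⟩ := hsc
  have hf : ConcaveOn ℝ (Set.Icc x₀ x₁) f := by
    have hsq : ConvexOn ℝ (Set.Icc x₀ x₁) (fun x : ℝ => c / 2 * x ^ 2) := by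
      have h2 : ConvexOn ℝ (Set.Icc x₀ x₁) (fun x : ℝ => x ^ 2) :=
        (even_two.convexOn_pow).subset (Set.subset_univ _) (convex_Icc _ _)
      exact h2.smul (by positivity : (0 : ℝ) ≤ c / 2)
    have h := hcon.sub hsq
    have he : (fun x => f x + c / 2 * x ^ 2) - (fun x : ℝ => c / 2 * x ^ 2) = f := by
      funext x
      simp
    rwa [he] at h
  obtain ⟨h, hh, hvol⟩ := exists_goodStep_volume hx hf (half_pos hε₇) hε₇
  refine ⟨ε₇ * h / 4, by positivity, fun g _ hg hfg => hvol.trans (measure_mono ?_)⟩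
  rintro x ⟨h1, h2, h3, h4⟩
  have hxI : x ∈ Set.Ioo x₀ x₁ := ⟨by linarith, by linarith⟩
  have hxc : x ∈ Set.Icc x₀ x₁ := Set.Ioo_subset_Icc_self hxI
  have hpc : x + h ∈ Set.Icc x₀ x₁ := ⟨by linarith, h2.le⟩
  have hmc : x - h ∈ Set.Icc x₀ x₁ := ⟨h1.le, by linarith⟩
  have hr := hg.slope_le_of_hasDerivWithinAt_Ioi hxc hpc (by linarith)
    (hasRightDeriv_of_concaveOn hg hxI)
  have hl := hg.le_slope_of_hasDerivWithinAt_Iio hmc hxc (by linarith)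
    (hasLeftDeriv_of_concaveOn hg hxI)
  have hrl := rightDeriv_le_leftDeriv_of_concaveOn hg hxI
  rw [slope_comm] at h4
  rw [slope_def_field] at hr hl h3 h4
  rw [add_sub_cancel_left] at hr h3
  rw [sub_sub_cancel] at hl h4
  rw [div_le_iff₀ hh] at hr
  rw [lt_div_iff₀ hh] at h3
  rw [le_div_iff₀ hh] at hl
  rw [div_lt_iff₀ hh] at h4
  have ex := abs_lt.1 (hfg x hxc)
  have ep := abs_lt.1 (hfg _ hpc)
  have em := abs_lt.1 (hfg _ hmc)
  have hlow : derivWithin f (Set.Ioi x) x - ε₇ ≤ derivWithin g (Set.Ioi x) x :=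
    le_of_mul_le_mul_right (by linarith [ex.1, ex.2, ep.1, ep.2]) hh
  have hupp : derivWithin g (Set.Iio x) x ≤ derivWithin f (Set.Iio x) x + ε₇ :=
    le_of_mul_le_mul_right (by linarith [ex.1, ex.2, em.1, em.2]) hh
  exact ⟨hxI, ⟨hlow, hrl.trans hupp⟩, ⟨hlow.trans hrl, hupp⟩⟩
end
end
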